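/- For every nonnegative integer k, the function s ↦ Γ(s+k) ζ_{MT,2}(s, s−k, 2s+k) / Γ(s) (initially defined for Re(s) > 1 and extended meromorphically) is holomorphic at s = −ℓ for every ℓ ∈ ℕ₀. Moreover s ↦ ζ_{MT,2}(s, s−k, 2s+k) itself is holomorphic at s = −ℓ for every integer ℓ ≥ k/2. -/

import Mathlib

open Filter Topology

/-- The Mordell–Tornheim double zeta function, defined by its double series
(indexed so that `m = p.1 + 1 ≥ 1`, `n = p.2 + 1 ≥ 1`). -/
noncomputable def zetaMT (s₁ s₂ s₃ : ℂ) : ℂ :=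
  ∑' p : ℕ × ℕ, ((p.1 + 1 : ℕ) : ℂ) ^ (-s₁) * ((p.2 + 1 : ℕ) : ℂ) ^ (-s₂) *
    ((p.1 + p.2 + 2 : ℕ) : ℂ) ^ (-s₃)

section helpers
open scoped FourierTransform

lemma differentiableOn_integral_param {U : Set ℂ} (hU : IsOpen U) {μ : MeasureTheory.Measure ℝ}
    (f : ℂ → ℝ → ℂ) (hmeas : ∀ s ∈ U, MeasureTheory.AEStronglyMeasurable (f s) μ)
    (hdiff : ∀ᵐ t ∂μ, DifferentiableOn ℂ (fun s => f s t) U)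
    (hb : ∀ s₀ ∈ U, ∃ V ∈ 𝓝 s₀, ∃ bound : ℝ → ℝ, MeasureTheory.Integrable bound μ ∧
      ∀ᵐ t ∂μ, ∀ s ∈ V, ‖f s t‖ ≤ bound t) :
    DifferentiableOn ℂ (fun s => ∫ t, f s t ∂μ) U := by
  intro s₀ hs₀
  obtain ⟨V, hV, bound, hbi, hbd⟩ := hb s₀ hs₀
  obtain ⟨r', hr', hball⟩ := Metric.mem_nhds_iff.mp (inter_mem hV (hU.mem_nhds hs₀))
  obtain ⟨r, hr, hrr⟩ : ∃ r : ℝ, 0 < r ∧ 2 * r < r' := ⟨r' / 4, by linarith, by linarith⟩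
  have hsub : ∀ s ∈ Metric.ball s₀ r, Metric.closedBall s r ⊆ V ∩ U := by
    intro s hs z hz
    apply hball
    rw [Metric.mem_ball] at *
    rw [Metric.mem_closedBall] at hz
    linarith [dist_triangle z s s₀]
  have hs₀b : s₀ ∈ Metric.ball s₀ r := Metric.mem_ball_self hr
  have hsU : ∀ s ∈ Metric.ball s₀ r, s ∈ V ∩ U := fun s hs =>
    hsub s hs (Metric.mem_closedBall_self hr.le)
  refine (hasDerivAt_integral_of_dominated_loc_of_deriv_le
    (F := f) (F' := fun s t => deriv (fun z => f z t) s)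
    (bound := fun t => bound t / r) (Metric.ball_mem_nhds s₀ hr) ?_ ?_ ?_ ?_ ?_ ?_).2.differentiableAt.differentiableWithinAt
  · filter_upwards [hU.mem_nhds hs₀] with s hs using hmeas s hs
  · refine hbi.mono' (hmeas s₀ hs₀) ?_
    filter_upwards [hbd] with t ht using ht s₀ (mem_of_mem_nhds hV)
  · refine aestronglyMeasurable_of_tendsto_ae atTop
      (f := fun (n : ℕ) t => ((r / (n + 2) : ℝ) : ℂ)⁻¹ • (f (s₀ + ((r / (n + 2) : ℝ) : ℂ)) t - f s₀ t)) ?_ ?_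
    · intro n
      refine ((hmeas _ ?_).sub (hmeas _ hs₀)).const_smul (((r / (n + 2) : ℝ) : ℂ)⁻¹)
      apply (hsU _ _).2
      rw [Metric.mem_ball, dist_eq_norm, add_sub_cancel_left, Complex.norm_real, Real.norm_of_nonneg (by positivity)]
      apply div_lt_self hr
      have : (0 : ℝ) ≤ n := Nat.cast_nonneg n
      linarith
    · filter_upwards [hdiff] with t ht
      have h1 := ((ht s₀ hs₀).differentiableAt (hU.mem_nhds hs₀)).hasDerivAt
      have h2 := h1.tendsto_slope_zero
      have h3 : Tendsto (fun n : ℕ => ((r / (n + 2) : ℝ) : ℂ)) atTop (𝓝[≠] 0) := by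
        rw [tendsto_nhdsWithin_iff]
        constructor
        · rw [← Complex.ofReal_zero]
          apply (Complex.continuous_ofReal.tendsto 0).comp
          apply Tendsto.div_atTop tendsto_const_nhds
          exact tendsto_atTop_add_const_right _ _ tendsto_natCast_atTop_atTop
        · refine Eventually.of_forall fun n => ?_
          simp only [Set.mem_compl_iff, Set.mem_singleton_iff, Complex.ofReal_eq_zero]
          positivity
      exact h2.comp h3
  · filter_upwards [hbd, hdiff] with t ht hd s hs
    refine Complex.norm_deriv_le_of_forall_mem_sphere_norm_le hr ?_ ?_
    · refine (hd.mono ?_).diffContOnCl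
      rw [closure_ball _ hr.ne']
      exact (hsub s hs).trans Set.inter_subset_right
    · intro z hz
      exact ht z (hsub s hs (Metric.sphere_subset_closedBall hz)).1
  · exact hbi.div_const r
  · filter_upwards [hdiff] with t hd s hs
    exact ((hd s (hsU s hs).2).differentiableAt (hU.mem_nhds (hsU s hs).2)).hasDerivAt

lemma integral_cpow_exp_complex {a r : ℂ} (ha : 0 < a.re) (hr : 0 < r.re) :
    ∫ t in Set.Ioi (0 : ℝ), (t : ℂ) ^ (a - 1) * Complex.exp (-(r * t)) =
      Complex.Gamma a * r ^ (-a) := by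
  set U : Set ℂ := {z | 0 < z.re} with hUdef
  have hU : IsOpen U := isOpen_lt continuous_const Complex.continuous_re
  have hd : DifferentiableOn ℂ (fun r : ℂ => ∫ t in Set.Ioi (0 : ℝ),
      (t : ℂ) ^ (a - 1) * Complex.exp (-(r * t))) U := by
    apply differentiableOn_integral_param hU
    · intro s hs
      apply ContinuousOn.aestronglyMeasurable _ measurableSet_Ioi
      apply ContinuousOn.mul
      · intro t ht
        exact (Complex.continuousAt_ofReal_cpow_const t _ (Or.inr (ne_of_gt ht))).continuousWithinAt
      · fun_prop
    · refine Eventually.of_forall fun t => ?_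
      fun_prop
    · intro s₀ hs₀
      have hs₀' : 0 < s₀.re := hs₀
      refine ⟨{z | s₀.re / 2 < z.re}, (isOpen_lt continuous_const Complex.continuous_re).mem_nhds
        (half_lt_self hs₀'), fun t => t ^ (a.re - 1) * Real.exp (-(s₀.re / 2) * t), ?_, ?_⟩
      · exact integrableOn_rpow_mul_exp_neg_mul_rpow (s := a.re - 1) (p := 1) (by linarith) one_pos (half_pos hs₀') |>.congr_fun (fun t ht => by simp) measurableSet_Ioi
      · filter_upwards [MeasureTheory.ae_restrict_mem measurableSet_Ioi] with t ht z hz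
        have ht' : 0 < t := ht
        have hz' : s₀.re / 2 < z.re := hz
        rw [norm_mul, Complex.norm_cpow_eq_rpow_re_of_pos ht, Complex.norm_exp]
        simp only [Complex.sub_re, Complex.one_re, Complex.neg_re, Complex.mul_re, Complex.ofReal_re, Complex.ofReal_im, mul_zero, sub_zero]
        gcongr ?_ * Real.exp ?_
        nlinarith
  have hd2 : DifferentiableOn ℂ (fun r : ℂ => Complex.Gamma a * r ^ (-a)) U := by
    intro z hz
    apply DifferentiableAt.differentiableWithinAt
    exact (differentiableAt_id.cpow_const (Or.inl hz)).const_mul _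
  have hconn : IsPreconnected U := (convex_halfSpace_re_gt 0).isPreconnected
  refine (hd.analyticOnNhd hU).eqOn_of_preconnected_of_frequently_eq (hd2.analyticOnNhd hU) hconn
    (z₀ := 1) (by simp [hUdef]) ?_ hr
  have h3 : Tendsto (fun n : ℕ => ((1 + 1 / (n + 1) : ℝ) : ℂ)) atTop (𝓝[≠] 1) := by
    rw [tendsto_nhdsWithin_iff]
    constructor
    · have : Tendsto (fun n : ℕ => (1 + 1 / (n + 1) : ℝ)) atTop (𝓝 1) := by
        simpa using tendsto_one_div_add_atTop_nhds_zero_nat.const_add (1 : ℝ)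
      have h := (Complex.continuous_ofReal.tendsto 1).comp this
      rw [Complex.ofReal_one] at h
      exact h
    · refine Eventually.of_forall fun n => ?_
      simp only [Set.mem_compl_iff, Set.mem_singleton_iff]
      intro h
      rw [Complex.ofReal_eq_one] at h
      have : (0 : ℝ) < 1 / (n + 1) := by positivity
      linarith
  refine h3.frequently (Frequently.of_forall fun n => ?_)
  have hpos : (0 : ℝ) < (1 + 1 / (n + 1) : ℝ) := by positivity
  generalize (1 + 1 / (n + 1) : ℝ) = x at hpos
  rw [Complex.integral_cpow_mul_exp_neg_mul_Ioi ha hpos, one_div, mul_comm,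
    Complex.inv_cpow _ _ (by rw [Complex.arg_ofReal_of_nonneg hpos.le]; exact Real.pi_pos.ne), Complex.cpow_neg]

noncomputable def Li (w : ℂ) (t : ℝ) : ℂ :=
  ∑' n : ℕ, ((n + 1 : ℕ) : ℂ) ^ (-w) * (Real.exp (-((n + 1 : ℕ) : ℝ) * t) : ℂ)

lemma expsum_bound (p : ℕ) : ∃ C : ℝ, 0 < C ∧ ∀ t : ℝ, 0 < t →
    Summable (fun n : ℕ => ((n + 1 : ℕ) : ℝ) ^ p * Real.exp (-((n + 1 : ℕ) : ℝ) * t)) ∧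
    ∑' n : ℕ, ((n + 1 : ℕ) : ℝ) ^ p * Real.exp (-((n + 1 : ℕ) : ℝ) * t) ≤
      C / t ^ (p + 1) * Real.exp (-t / 2) := by
  refine ⟨p.factorial * 4 ^ p * 4, by positivity, fun t ht => ?_⟩
  set r := Real.exp (-(3 * t / 4)) with hr
  have hr0 : 0 < r := Real.exp_pos _
  have hr1 : r < 1 := by rw [hr, Real.exp_lt_one_iff]; linarith
  have hterm : ∀ n : ℕ, ((n + 1 : ℕ) : ℝ) ^ p * Real.exp (-((n + 1 : ℕ) : ℝ) * t) ≤
      (p.factorial * (4 / t) ^ p) * r * r ^ n := by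
    intro n
    have h1 := Real.pow_div_factorial_le_exp (((n + 1 : ℕ) : ℝ) * t / 4) (by positivity) p
    have h2 : ((n + 1 : ℕ) : ℝ) ^ p ≤
        p.factorial * (4 / t) ^ p * Real.exp (((n + 1 : ℕ) : ℝ) * t / 4) := by
      calc ((n + 1 : ℕ) : ℝ) ^ p = p.factorial * (4 / t) ^ p *
            ((((n + 1 : ℕ) : ℝ) * t / 4) ^ p / p.factorial) := by
            rw [div_pow, div_pow, mul_pow]; field_simp
        _ ≤ _ := by gcongr
    have h3 : r * r ^ n = Real.exp (((n + 1 : ℕ) : ℝ) * t / 4) *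
        Real.exp (-((n + 1 : ℕ) : ℝ) * t) := by
      rw [← pow_succ', hr, ← Real.exp_nat_mul, ← Real.exp_add]; congr 1; push_cast; ring
    rw [mul_assoc, h3, ← mul_assoc]
    gcongr
  have hg : HasSum (fun n : ℕ => (p.factorial * (4 / t) ^ p) * r * r ^ n)
      ((p.factorial * (4 / t) ^ p) * r * (1 - r)⁻¹) :=
    (hasSum_geometric_of_lt_one hr0.le hr1).mul_left _
  have hs : Summable (fun n : ℕ => ((n + 1 : ℕ) : ℝ) ^ p *
      Real.exp (-((n + 1 : ℕ) : ℝ) * t)) :=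
    Summable.of_nonneg_of_le (fun n => by positivity) hterm hg.summable
  refine ⟨hs, (hs.tsum_le_tsum hterm hg.summable).trans ?_⟩
  rw [hg.tsum_eq]
  have hkey : r * (1 - r)⁻¹ ≤ 4 / t * Real.exp (-t / 2) := by
    rw [← div_eq_mul_inv, div_le_iff₀ (by linarith)]
    have e1 : r = Real.exp (-t / 2) * Real.exp (-(t / 4)) := by
      rw [hr, ← Real.exp_add]; congr 1; ring
    have e2 : t / 4 * Real.exp (-(t / 4)) ≤ 1 - Real.exp (-(t / 4)) := by
      have := Real.add_one_le_exp (t / 4)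
      have h4 : Real.exp (t / 4) * Real.exp (-(t / 4)) = 1 := by
        rw [← Real.exp_add]; simp
      have := mul_le_mul_of_nonneg_right this (Real.exp_pos (-(t / 4))).le
      linarith
    have e3 : r ≤ Real.exp (-(t / 4)) := by
      rw [hr]; apply Real.exp_le_exp.mpr; linarith
    have e4 : t / 4 * Real.exp (-(t / 4)) ≤ 1 - r := by linarith
    calc r = 4 / t * Real.exp (-t / 2) * (t / 4 * Real.exp (-(t / 4))) := by
          rw [e1]; field_simp
      _ ≤ _ := by gcongr
  calc (p.factorial * (4 / t) ^ p) * r * (1 - r)⁻¹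
      = (p.factorial * (4 / t) ^ p) * (r * (1 - r)⁻¹) := by ring
    _ ≤ (p.factorial * (4 / t) ^ p) * (4 / t * Real.exp (-t / 2)) := by gcongr
    _ = _ := by rw [div_pow, pow_succ]; field_simp

lemma norm_term_le {w : ℂ} {p : ℕ} (hw : -w.re ≤ p) (n : ℕ) (t : ℝ) :
    ‖((n + 1 : ℕ) : ℂ) ^ (-w) * (Real.exp (-((n + 1 : ℕ) : ℝ) * t) : ℂ)‖ ≤
      ((n + 1 : ℕ) : ℝ) ^ p * Real.exp (-((n + 1 : ℕ) : ℝ) * t) := by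
  rw [norm_mul, Complex.norm_natCast_cpow_of_pos (Nat.succ_pos n), Complex.norm_real,
    Real.norm_of_nonneg (Real.exp_pos _).le]
  gcongr
  rw [← Real.rpow_natCast]
  apply Real.rpow_le_rpow_of_exponent_le
  · push_cast; linarith [(Nat.cast_nonneg n : (0 : ℝ) ≤ n)]
  · simpa using hw

lemma Li_summable (w : ℂ) {t : ℝ} (ht : 0 < t) :
    Summable (fun n : ℕ => ‖((n + 1 : ℕ) : ℂ) ^ (-w) *
      (Real.exp (-((n + 1 : ℕ) : ℝ) * t) : ℂ)‖) := by
  obtain ⟨p, hp⟩ := exists_nat_ge (-w.re)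
  obtain ⟨C, _, hC⟩ := expsum_bound p
  exact Summable.of_nonneg_of_le (fun _ => norm_nonneg _) (fun n => norm_term_le hp n t)
    (hC t ht).1

lemma Li_hasSum (w : ℂ) {t : ℝ} (ht : 0 < t) :
    HasSum (fun n : ℕ => ((n + 1 : ℕ) : ℂ) ^ (-w) *
      (Real.exp (-((n + 1 : ℕ) : ℝ) * t) : ℂ)) (Li w t) :=
  (Li_summable w ht).of_norm.hasSum

lemma Li_norm_le (p : ℕ) : ∃ C : ℝ, 0 < C ∧ ∀ w : ℂ, -w.re ≤ p → ∀ t : ℝ, 0 < t →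
    ‖Li w t‖ ≤ C / t ^ (p + 1) * Real.exp (-t / 2) := by
  obtain ⟨C, hC0, hC⟩ := expsum_bound p
  refine ⟨C, hC0, fun w hw t ht => ?_⟩
  refine le_trans ?_ (hC t ht).2
  exact tsum_of_norm_bounded (hC t ht).1.hasSum (fun n => norm_term_le hw n t)

lemma Li_hasDerivAt (w : ℂ) {t : ℝ} (ht : 0 < t) :
    HasDerivAt (fun u : ℝ => Li w u) (-Li (w - 1) t) t := by
  obtain ⟨p, hp⟩ := exists_nat_ge (-(w - 1).re)
  obtain ⟨C, _, hC⟩ := expsum_bound p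
  have h := hasDerivAt_tsum_of_isPreconnected
    (g := fun (n : ℕ) (u : ℝ) => ((n + 1 : ℕ) : ℂ) ^ (-w) *
      (Real.exp (-((n + 1 : ℕ) : ℝ) * u) : ℂ))
    (g' := fun (n : ℕ) (u : ℝ) => -(((n + 1 : ℕ) : ℂ) ^ (-(w - 1)) *
      (Real.exp (-((n + 1 : ℕ) : ℝ) * u) : ℂ)))
    (t := Set.Ioi (t / 2)) (y₀ := t) (y := t)
    (hC (t / 2) (half_pos ht)).1 isOpen_Ioi isPreconnected_Ioi ?_ ?_ ?_ ?_ ?_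
  · rw [tsum_neg] at h
    exact h
  · intro n y hy
    have h1 : HasDerivAt (fun u : ℝ => Real.exp (-((n + 1 : ℕ) : ℝ) * u))
        (Real.exp (-((n + 1 : ℕ) : ℝ) * y) * (-((n + 1 : ℕ) : ℝ) * 1)) y :=
      ((hasDerivAt_id y).const_mul _).exp
    have h2 := (h1.ofReal_comp).const_mul (((n + 1 : ℕ) : ℂ) ^ (-w))
    refine h2.congr_deriv ?_
    have hne : ((n + 1 : ℕ) : ℂ) ≠ 0 := Nat.cast_ne_zero.mpr (Nat.succ_ne_zero n)
    rw [show -(w - 1) = -w + 1 by ring, Complex.cpow_add _ _ hne, Complex.cpow_one]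
    push_cast; ring
  · intro n y hy
    rw [norm_neg]
    refine (norm_term_le hp n y).trans ?_
    have : t / 2 < y := hy
    gcongr ?_ * Real.exp ?_
    have : (0 : ℝ) ≤ ((n + 1 : ℕ) : ℝ) := by positivity
    nlinarith
  · exact half_lt_self ht
  · exact (Li_summable w ht).of_norm
  · exact half_lt_self ht

lemma Li_differentiable {t : ℝ} (ht : 0 < t) : Differentiable ℂ (fun w => Li w t) := by
  intro w
  obtain ⟨p, hp⟩ := exists_nat_gt (-w.re)
  obtain ⟨C, _, hC⟩ := expsum_bound p
  have ho : IsOpen {z : ℂ | -(p : ℝ) < z.re} := isOpen_lt continuous_const Complex.continuous_re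
  have := Complex.differentiableOn_tsum_of_summable_norm (F := fun (n : ℕ) (w : ℂ) =>
    ((n + 1 : ℕ) : ℂ) ^ (-w) * (Real.exp (-((n + 1 : ℕ) : ℝ) * t) : ℂ)) (hC t ht).1
    (U := {z : ℂ | -(p : ℝ) < z.re}) ?_ ho ?_
  · exact this.differentiableAt (ho.mem_nhds (by simp; linarith))
  · intro n z _
    have hne : ((n + 1 : ℕ) : ℂ) ≠ 0 := Nat.cast_ne_zero.mpr (Nat.succ_ne_zero n)
    apply DifferentiableAt.differentiableWithinAt
    exact ((differentiableAt_id.neg).const_cpow (Or.inl hne)).mul_const _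
  · intro n z hz
    have : -(p : ℝ) < z.re := hz
    exact norm_term_le (by linarith) n t

lemma Li_continuousOn (w : ℂ) : ContinuousOn (fun t : ℝ => Li w t) (Set.Ioi 0) :=
  fun t ht => (Li_hasDerivAt w ht).continuousAt.continuousWithinAt

noncomputable def zn (t : ℝ) (n : ℤ) : ℂ := (t : ℂ) + 2 * Real.pi * n * Complex.I

lemma zn_re (t : ℝ) (n : ℤ) : (zn t n).re = t := by simp [zn]
lemma zn_im (t : ℝ) (n : ℤ) : (zn t n).im = 2 * Real.pi * n := by simp [zn]

lemma zn_cpow_bound {w : ℂ} (hw : w.re < 0) (t : ℝ) {n : ℤ} (hn : n ≠ 0) :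
    ‖(zn t n) ^ (w - 1)‖ ≤ Real.exp (Real.pi * |w.im|) * |(n : ℝ)| ^ (w.re - 1) := by
  have hn' : (0 : ℝ) < |(n : ℝ)| := abs_pos.mpr (Int.cast_ne_zero.mpr hn)
  have h1 : |(n : ℝ)| ≤ ‖zn t n‖ := by
    refine le_trans ?_ (Complex.abs_im_le_norm _)
    rw [zn_im, abs_mul, abs_of_pos (show (0 : ℝ) < 2 * Real.pi by positivity)]
    nlinarith [Real.pi_gt_three]
  have hne : zn t n ≠ 0 := norm_pos_iff.mp (hn'.trans_le h1)
  rw [Complex.norm_cpow_of_ne_zero hne, div_eq_mul_inv, ← Real.exp_neg, mul_comm]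
  simp only [Complex.sub_re, Complex.one_re, Complex.sub_im, Complex.one_im, sub_zero]
  gcongr ?_ * ?_
  · apply Real.exp_le_exp.mpr
    calc -((zn t n).arg * w.im) ≤ |(zn t n).arg * w.im| := neg_le_abs _
      _ = |(zn t n).arg| * |w.im| := abs_mul _ _
      _ ≤ _ := by gcongr; exact Complex.abs_arg_le_pi _
  · exact Real.rpow_le_rpow_of_nonpos hn' h1 (by linarith)

lemma zn_summable {w : ℂ} (hw : w.re < 0) (t : ℝ) :
    Summable (fun n : ℤ => (zn t n) ^ (w - 1)) := by
  have h := (Real.summable_abs_int_rpow (b := 1 - w.re) (by linarith)).mul_left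
    (Real.exp (Real.pi * |w.im|))
  refine Summable.of_norm_bounded_eventually h ?_
  have : ∀ᶠ n : ℤ in cofinite, n ≠ 0 := by
    exact (Set.finite_singleton (0 : ℤ)).compl_mem_cofinite
  filter_upwards [this] with n hn
  rw [neg_sub]
  exact zn_cpow_bound hw t hn

lemma poisson_Li {w : ℂ} (hw : w.re < 0) {t : ℝ} (ht : 0 < t) :
    Li w t = Complex.Gamma (1 - w) * ∑' n : ℤ, (zn t n) ^ (w - 1) := by
  have hw0 : -w ≠ 0 := by
    intro h; rw [neg_eq_zero] at h; simp [h] at hw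
  set f : ℝ → ℂ := fun x => ((max x 0 : ℝ) : ℂ) ^ (-w) * (Real.exp (-t * x) : ℂ) with hf
  have hf0 : ∀ x ≤ 0, f x = 0 := by
    intro x hx
    simp only [hf]
    rw [max_eq_right hx, Complex.ofReal_zero, Complex.zero_cpow hw0, zero_mul]
  have hcont : Continuous f := by
    apply Continuous.mul
    · exact (Complex.continuous_ofReal_cpow_const (y := -w) (by simpa using hw)).comp
        (continuous_id.max continuous_const)
    · fun_prop
  have hdecay : f =O[cocompact ℝ] (fun x : ℝ => |x| ^ (-2 : ℝ)) := by
    rw [cocompact_eq_atBot_atTop, Asymptotics.isBigO_sup]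
    constructor
    · refine Asymptotics.IsBigO.congr' (Asymptotics.isBigO_zero _ atBot) ?_ EventuallyEq.rfl
      filter_upwards [eventually_le_atBot 0] with x hx using (hf0 x hx).symm
    · have h := (isLittleO_exp_neg_mul_rpow_atTop ht (-2 + w.re)).isBigO
      have h2 : (fun x : ℝ => x ^ (-w.re) * Real.exp (-t * x)) =O[atTop]
          (fun x : ℝ => x ^ (-w.re) * x ^ (-2 + w.re)) :=
        (Asymptotics.isBigO_refl _ _).mul h
      refine Asymptotics.IsBigO.trans ?_ (h2.trans ?_)
      · refine Asymptotics.IsBigO.of_bound 1 ?_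
        filter_upwards [eventually_gt_atTop 0] with x hx
        simp only [hf]
        rw [max_eq_left hx.le, norm_mul, Complex.norm_cpow_eq_rpow_re_of_pos hx,
          Complex.norm_real, norm_mul, Complex.neg_re, one_mul]
        gcongr
        exact le_abs_self _
      · refine Asymptotics.IsBigO.of_bound 1 ?_
        filter_upwards [eventually_gt_atTop 0] with x hx
        rw [← Real.rpow_add hx, abs_of_pos hx, one_mul]
        apply le_of_eq; congr 2; ring
  have hfour : ∀ n : ℤ, 𝓕 f (n : ℝ) = Complex.Gamma (1 - w) * (zn t n) ^ (w - 1) := by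
    intro n
    rw [Real.fourier_real_eq_integral_exp_smul]
    have h1 := integral_cpow_exp_complex (a := 1 - w) (r := zn t n) (by simp; linarith)
      (by rw [zn_re]; exact ht)
    rw [neg_sub] at h1
    rw [← h1, ← MeasureTheory.setIntegral_eq_integral_of_forall_compl_eq_zero (s := Set.Ioi 0)]
    · refine MeasureTheory.setIntegral_congr_fun measurableSet_Ioi (fun x hx => ?_)
      have hx' : 0 < x := hx
      simp only [hf, smul_eq_mul]
      rw [max_eq_left hx'.le, mul_left_comm, Complex.ofReal_exp, ← Complex.exp_add]
      congr 2
      · ring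
      · simp only [zn]; push_cast; ring
    · intro x hx
      rw [hf0 x (by simpa using hx), smul_zero]
  have hsum : Summable (fun n : ℤ => 𝓕 f (n : ℝ)) := by
    simp_rw [hfour]
    exact (zn_summable hw t).mul_left _
  have hP := Real.tsum_eq_tsum_fourier_of_rpow_decay_of_summable hcont (b := 2) (by norm_num)
    hdecay hsum 0
  rw [← tsum_mul_left]
  have hR : ∑' n : ℤ, 𝓕 f (n : ℝ) * fourier n ((0 : ℝ) : UnitAddCircle) =
      ∑' n : ℤ, Complex.Gamma (1 - w) * (zn t n) ^ (w - 1) := by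
    refine tsum_congr fun n => ?_
    rw [hfour n]
    simp
  rw [← hR, ← hP]
  symm
  refine HasSum.tsum_eq ?_
  have hinj : Function.Injective (fun n : ℕ => ((n : ℤ) + 1)) := by
    intro a b h; simpa using h
  rw [← hinj.hasSum_iff]
  · refine (Li_hasSum w ht).congr_fun ?_ |> fun h => h
    intro n
    have : (0 : ℝ) ≤ (n : ℝ) + 1 := by positivity
    simp only [hf, Function.comp, zero_add]
    push_cast
    rw [max_eq_left this]
    push_cast
    congr 2
    ring
  · intro m hm
    apply hf0
    rw [zero_add]
    by_contra hcon
    push Not at hcon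
    have : 0 < m := by exact_mod_cast hcon
    exact hm ⟨(m - 1).toNat, by simp only; omega⟩

noncomputable def Lf (w : ℂ) (t : ℝ) : ℂ := Li w t - Complex.Gamma (1 - w) * (t : ℂ) ^ (w - 1)

lemma Lf_eq {w : ℂ} (hw : w.re < 0) {t : ℝ} (ht : 0 < t) :
    Lf w t = Complex.Gamma (1 - w) * ∑' n : ℕ, ((zn t (n + 1)) ^ (w - 1) +
      (zn t (-(n + 1))) ^ (w - 1)) := by
  have hs := zn_summable hw t
  have hs1 : Summable (fun n : ℕ => (zn t (n : ℤ)) ^ (w - 1)) :=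
    hs.comp_injective (i := fun n : ℕ => (n : ℤ)) Nat.cast_injective
  have hs2 : Summable (fun n : ℕ => (zn t (-((n : ℤ) + 1))) ^ (w - 1)) :=
    hs.comp_injective (i := fun n : ℕ => (-((n : ℤ) + 1))) (fun a b h => by simpa using h)
  have hs3 : Summable (fun n : ℕ => (zn t ((n : ℤ) + 1)) ^ (w - 1)) :=
    hs.comp_injective (i := fun n : ℕ => (((n : ℤ) + 1))) (fun a b h => by simpa using h)
  rw [Lf, poisson_Li hw ht, tsum_of_nat_of_neg_add_one (f := fun n : ℤ => (zn t n) ^ (w - 1)) hs1 hs2,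
    hs1.tsum_eq_zero_add, hs3.tsum_add hs2]
  have : zn t ((0 : ℕ) : ℤ) = t := by simp [zn]
  rw [this]
  push_cast
  ring

lemma Lf_bound {w : ℂ} (hw : w.re < 0) (t : ℝ) (n : ℕ) :
    ‖(zn t (n + 1)) ^ (w - 1) + (zn t (-(n + 1))) ^ (w - 1)‖ ≤
      2 * Real.exp (Real.pi * |w.im|) * ((n : ℝ) + 1) ^ (w.re - 1) := by
  have h1 := zn_cpow_bound hw t (n := (n : ℤ) + 1) (by omega)
  have h2 := zn_cpow_bound hw t (n := -((n : ℤ) + 1)) (by omega)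
  have h3 : |(((n : ℤ) + 1 : ℤ) : ℝ)| = (n : ℝ) + 1 := by
    push_cast; exact abs_of_pos (by positivity)
  have h4 : |((-((n : ℤ) + 1) : ℤ) : ℝ)| = (n : ℝ) + 1 := by
    rw [Int.cast_neg, abs_neg, h3]
  rw [h3] at h1; rw [h4] at h2
  exact (norm_add_le _ _).trans (by linarith)

lemma summable_shift {x : ℝ} (hx : x < 0) : Summable (fun n : ℕ => ((n : ℝ) + 1) ^ (x - 1)) := by
  have := (summable_nat_add_iff 1).mpr (Real.summable_nat_rpow (p := x - 1) |>.mpr (by linarith))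
  simpa using this

lemma Lf_loc_bound {w₀ : ℂ} (hw₀ : w₀.re < 0) : ∃ C : ℝ, 0 ≤ C ∧ ∀ᶠ w in 𝓝 w₀, ∀ t : ℝ, 0 < t →
    ‖Lf w t‖ ≤ C := by
  have hx : w₀.re / 2 < 0 := by linarith
  have hG : ContinuousAt (fun w => Complex.Gamma (1 - w)) w₀ := by
    refine ContinuousAt.comp (f := fun w : ℂ => 1 - w) (g := Complex.Gamma) ?_ (by fun_prop)
    apply Complex.continuousAt_Gamma
    intro m h
    have := congrArg Complex.re h
    simp at this
    have : (0 : ℝ) ≤ m := Nat.cast_nonneg m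
    linarith
  have e1 : ∀ᶠ w in 𝓝 w₀, ‖Complex.Gamma (1 - w)‖ < ‖Complex.Gamma (1 - w₀)‖ + 1 :=
    hG.norm.eventually_lt continuousAt_const (by linarith)
  have e2 : ∀ᶠ w : ℂ in 𝓝 w₀, |w.im| < |w₀.im| + 1 :=
    (Complex.continuous_im.abs.continuousAt).eventually_lt continuousAt_const (by linarith)
  have e3 : ∀ᶠ w : ℂ in 𝓝 w₀, w.re < w₀.re / 2 :=
    (Complex.continuous_re.continuousAt).eventually_lt continuousAt_const (by linarith)
  refine ⟨(‖Complex.Gamma (1 - w₀)‖ + 1) * ∑' n : ℕ, 2 * Real.exp (Real.pi * (|w₀.im| + 1)) *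
    ((n : ℝ) + 1) ^ (w₀.re / 2 - 1), ?_, ?_⟩
  · have : 0 ≤ ∑' n : ℕ, 2 * Real.exp (Real.pi * (|w₀.im| + 1)) *
      ((n : ℝ) + 1) ^ (w₀.re / 2 - 1) := tsum_nonneg fun n => by positivity
    positivity
  filter_upwards [e1, e2, e3] with w h1 h2 h3 t ht
  rw [Lf_eq (h3.trans hx) ht, norm_mul]
  gcongr
  refine tsum_of_norm_bounded ((summable_shift hx).mul_left _).hasSum fun n => ?_
  refine (Lf_bound (h3.trans hx) t n).trans ?_
  have : (0 : ℝ) ≤ n := Nat.cast_nonneg n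
  gcongr
  · linarith

lemma Lf_tendsto {w : ℂ} (hw : w.re < 0) :
    Tendsto (fun t : ℝ => Lf w t) (𝓝[>] 0) (𝓝 (riemannZeta w)) := by
  have h1 : Tendsto (fun t : ℝ => Complex.Gamma (1 - w) * ∑' n : ℕ, ((zn t (n + 1)) ^ (w - 1) +
      (zn t (-(n + 1))) ^ (w - 1))) (𝓝[>] 0) (𝓝 (Complex.Gamma (1 - w) * ∑' n : ℕ,
        ((zn 0 (n + 1)) ^ (w - 1) + (zn 0 (-(n + 1))) ^ (w - 1)))) := by
    apply Tendsto.const_mul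
    refine tendsto_tsum_of_dominated_convergence
      ((summable_shift hw).mul_left (2 * Real.exp (Real.pi * |w.im|))) ?_ ?_
    · intro n
      refine Tendsto.mono_left ?_ nhdsWithin_le_nhds
      have hc : ∀ m : ℤ, m ≠ 0 → Tendsto (fun t : ℝ => (zn t m) ^ (w - 1)) (𝓝 0)
          (𝓝 ((zn 0 m) ^ (w - 1))) := by
        intro m hm
        have hz : Continuous (fun t : ℝ => zn t m) := by unfold zn; fun_prop
        refine (hz.continuousAt.cpow continuousAt_const ?_).tendsto
        right
        rw [zn_im]
        have : (m : ℝ) ≠ 0 := Int.cast_ne_zero.mpr hm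
        have := Real.pi_ne_zero
        positivity
      exact (hc _ (by omega)).add (hc _ (by omega))
    · exact Eventually.of_forall fun t n => Lf_bound hw t n
  have h2 : Complex.Gamma (1 - w) * ∑' n : ℕ,
        ((zn 0 (n + 1)) ^ (w - 1) + (zn 0 (-(n + 1))) ^ (w - 1)) = riemannZeta w := by
    have hz := riemannZeta_one_sub (s := 1 - w) (by
      intro n h
      have := congrArg Complex.re h
      simp at this
      have : (0 : ℝ) ≤ n := Nat.cast_nonneg n
      linarith) (by
      intro h
      have := congrArg Complex.re h
      simp at this
      linarith)
    rw [sub_sub_cancel, zeta_eq_tsum_one_div_nat_add_one_cpow (s := 1 - w) (by simp; linarith)] at hz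
    rw [hz, ← tsum_mul_left, ← tsum_mul_left]
    refine tsum_congr fun n => ?_
    have hn : (0 : ℝ) < 2 * Real.pi * (n + 1) := by positivity
    have key : ∀ e : ℂ, e ≠ 0 → (((2 * Real.pi * (n + 1) : ℝ) : ℂ) * e) ^ (w - 1) =
        ((2 * Real.pi : ℝ) : ℂ) ^ (w - 1) * ((n + 1 : ℝ) : ℂ) ^ (w - 1) * e ^ (w - 1) := by
      intro e he
      have hne : ((2 * Real.pi * (n + 1) : ℝ) : ℂ) ≠ 0 := Complex.ofReal_ne_zero.mpr hn.ne'
      rw [Complex.cpow_def_of_ne_zero (mul_ne_zero hne he), Complex.log_ofReal_mul hn he,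
        Complex.ofReal_log hn.le, add_mul, Complex.exp_add, ← Complex.cpow_def_of_ne_zero hne,
        ← Complex.cpow_def_of_ne_zero he, Complex.ofReal_mul,
        Complex.mul_cpow_ofReal_nonneg (by positivity) (by positivity)]
    have e1 : zn 0 (n + 1) = ((2 * Real.pi * (n + 1) : ℝ) : ℂ) * Complex.I := by
      simp [zn]
    have e2 : zn 0 (-(n + 1)) = ((2 * Real.pi * (n + 1) : ℝ) : ℂ) * (-Complex.I) := by
      simp [zn]; ring
    rw [e1, e2, key _ Complex.I_ne_zero, key _ (neg_ne_zero.mpr Complex.I_ne_zero)]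
    have hI : Complex.I ^ (w - 1) = Complex.exp (-(Real.pi * (1 - w) / 2 * Complex.I)) := by
      rw [Complex.cpow_def_of_ne_zero Complex.I_ne_zero, Complex.log_I]
      congr 1; ring
    have hnI : (-Complex.I) ^ (w - 1) = Complex.exp (Real.pi * (1 - w) / 2 * Complex.I) := by
      rw [Complex.cpow_def_of_ne_zero (neg_ne_zero.mpr Complex.I_ne_zero), Complex.log_neg_I]
      congr 1; ring
    rw [hI, hnI, Complex.cos, ← neg_mul, neg_sub]
    rw [one_div, ← Complex.cpow_neg, neg_sub]
    push_cast
    ring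
  rw [h2] at h1
  refine h1.congr' ?_
  filter_upwards [self_mem_nhdsWithin] with t ht
  exact (Lf_eq hw ht).symm

noncomputable def Rf (M : ℕ) (w : ℂ) (t : ℝ) : ℂ :=
  Lf w t - ∑ j ∈ Finset.range M, riemannZeta (w - j) * (-(t : ℂ)) ^ j / (j.factorial : ℂ)

lemma one_sub_ne_neg_nat {w : ℂ} (hw : w.re < 1) (m : ℕ) : 1 - w ≠ -(m : ℂ) := by
  intro h
  have := congrArg Complex.re h
  simp at this
  have : (0 : ℝ) ≤ m := Nat.cast_nonneg m
  linarith

lemma Lf_hasDerivAt {w : ℂ} (hw : w.re < 0) {t : ℝ} (ht : 0 < t) :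
    HasDerivAt (fun u : ℝ => Lf w u) (-Lf (w - 1) t) t := by
  have h1 := Li_hasDerivAt w ht
  have hne : w - 1 ≠ 0 := by
    intro h; have := congrArg Complex.re h; simp at this; linarith
  have h2 : HasDerivAt (fun u : ℝ => (u : ℂ) ^ (w - 1)) ((w - 1) * (t : ℂ) ^ (w - 1 - 1)) t :=
    hasDerivAt_ofReal_cpow_const' (r := w - 1 - 1) ht.ne' (by
      intro h
      have := congrArg Complex.re h; simp at this; linarith) |> fun h => by
      have := h.const_mul (w - 1)
      refine (this.congr_deriv rfl).congr_of_eventuallyEq (Eventually.of_forall fun u => ?_)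
      simp only [sub_add_cancel]
      rw [mul_div_cancel₀ _ hne]
  refine (h1.sub (h2.const_mul (Complex.Gamma (1 - w)))).congr_deriv ?_
  have hG : Complex.Gamma (1 - (w - 1)) = (1 - w) * Complex.Gamma (1 - w) := by
    rw [show 1 - (w - 1) = (1 - w) + 1 by ring, Complex.Gamma_add_one]
    intro h; apply hne; linear_combination -h
  rw [Lf, hG]
  ring

lemma Rf_hasDerivAt (M : ℕ) {w : ℂ} (hw : w.re < 0) {t : ℝ} (ht : 0 < t) :
    HasDerivAt (fun u : ℝ => Rf (M + 1) w u) (-Rf M (w - 1) t) t := by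
  have hpoly : HasDerivAt (fun u : ℝ => ∑ j ∈ Finset.range M,
      riemannZeta (w - (j + 1 : ℕ)) * (-(u : ℂ)) ^ (j + 1) / ((j + 1).factorial : ℂ))
      (∑ j ∈ Finset.range M, -(riemannZeta (w - 1 - j) * (-(t : ℂ)) ^ j / (j.factorial : ℂ))) t := by
    apply HasDerivAt.fun_sum
    intro j _
    have h0 : HasDerivAt (fun u : ℝ => -(u : ℂ)) (-1) t := by
      have := (hasDerivAt_id t).ofReal_comp.neg
      exact this.congr_deriv (by simp)
    have h1 := ((h0.pow (j + 1)).const_mul (riemannZeta (w - (j + 1 : ℕ)))).div_const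
      ((j + 1).factorial : ℂ)
    refine h1.congr_deriv ?_
    have hf : ((j.factorial : ℕ) : ℂ) ≠ 0 := Nat.cast_ne_zero.mpr j.factorial_ne_zero
    have hj : ((j : ℂ) + 1) ≠ 0 := by exact_mod_cast Nat.succ_ne_zero j
    rw [Nat.factorial_succ, show w - ((j + 1 : ℕ) : ℂ) = w - 1 - j by push_cast; ring]
    push_cast
    field_simp
  have h := ((Lf_hasDerivAt hw ht).sub hpoly).sub_const (riemannZeta w)
  rw [Finset.sum_neg_distrib] at h
  refine (h.congr_deriv ?_).congr_of_eventuallyEq (Eventually.of_forall fun u => ?_)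
  · rw [Rf]; ring
  · simp only [Rf, Finset.sum_range_succ', Pi.sub_apply]
    simp
    ring

lemma Rf_tendsto (M : ℕ) {w : ℂ} (hw : w.re < 0) :
    Tendsto (fun t : ℝ => Rf (M + 1) w t) (𝓝[>] 0) (𝓝 0) := by
  have h1 : Tendsto (fun t : ℝ => ∑ j ∈ Finset.range (M + 1),
      riemannZeta (w - j) * (-(t : ℂ)) ^ j / (j.factorial : ℂ)) (𝓝[>] 0) (𝓝 (riemannZeta w)) := by
    refine Tendsto.mono_left ?_ nhdsWithin_le_nhds
    have hc : Continuous (fun t : ℝ => ∑ j ∈ Finset.range (M + 1),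
      riemannZeta (w - j) * (-(t : ℂ)) ^ j / (j.factorial : ℂ)) := by fun_prop
    have := hc.tendsto 0
    rw [Finset.sum_range_succ'] at this
    simpa using this
  have := (Lf_tendsto hw).sub h1
  rw [sub_self] at this
  exact this

lemma Rf_loc_bound (M : ℕ) : ∀ {w₀ : ℂ}, w₀.re < 0 → ∃ C : ℝ, 0 ≤ C ∧ ∀ᶠ w in 𝓝 w₀,
    ∀ t : ℝ, 0 < t → ‖Rf M w t‖ ≤ C * t ^ M := by
  induction M with
  | zero =>
    intro w₀ hw₀
    obtain ⟨C, hC, h⟩ := Lf_loc_bound hw₀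
    refine ⟨C, hC, ?_⟩
    filter_upwards [h] with w hw t ht
    simpa [Rf] using hw t ht
  | succ M ih =>
    intro w₀ hw₀
    obtain ⟨C, hC, h⟩ := ih (w₀ := w₀ - 1) (by simp; linarith)
    refine ⟨C, hC, ?_⟩
    have hcont : Tendsto (fun w : ℂ => w - 1) (𝓝 w₀) (𝓝 (w₀ - 1)) :=
      (continuous_id.sub continuous_const).tendsto _
    have e3 : ∀ᶠ w : ℂ in 𝓝 w₀, w.re < 0 :=
      (Complex.continuous_re.continuousAt).eventually_lt continuousAt_const hw₀
    filter_upwards [hcont.eventually h, e3] with w hw hw0 t ht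
    have hmv : ∀ ε ∈ Set.Ioo 0 t, ‖Rf (M + 1) w t - Rf (M + 1) w ε‖ ≤ C * t ^ (M + 1) := by
      intro ε hε
      have := Convex.norm_image_sub_le_of_norm_hasDerivWithin_le (s := Set.Icc ε t)
        (f := fun u : ℝ => Rf (M + 1) w u) (f' := fun u => -Rf M (w - 1) u) (C := C * t ^ M)
        (x := ε) (y := t)
        (fun u hu => (Rf_hasDerivAt M hw0 (hε.1.trans_le hu.1)).hasDerivWithinAt)
        (fun u hu => by
          rw [norm_neg]
          have hu0 := hε.1.trans_le hu.1
          refine (hw u hu0).trans ?_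
          gcongr
          exact hu.2)
        (convex_Icc _ _) (Set.left_mem_Icc.mpr hε.2.le) (Set.right_mem_Icc.mpr hε.2.le)
      refine this.trans ?_
      rw [Real.norm_of_nonneg (by linarith [hε.2]), pow_succ, ← mul_assoc]
      gcongr
      linarith [hε.1]
    have hlim : Tendsto (fun ε : ℝ => ‖Rf (M + 1) w t - Rf (M + 1) w ε‖) (𝓝[>] 0)
        (𝓝 ‖Rf (M + 1) w t - 0‖) := (tendsto_const_nhds.sub (Rf_tendsto M hw0)).norm
    rw [sub_zero] at hlim
    refine le_of_tendsto hlim ?_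
    filter_upwards [Ioo_mem_nhdsGT ht] with ε hε using hmv ε hε

lemma Rf_continuousOn (M : ℕ) {w : ℂ} (hw : w.re < 0) :
    ContinuousOn (fun t : ℝ => Rf M w t) (Set.Ioi 0) := by
  unfold Rf
  apply ContinuousOn.sub
  · exact fun t ht => (Lf_hasDerivAt hw ht).continuousAt.continuousWithinAt
  · fun_prop

lemma Rf_differentiableAt (M : ℕ) {w : ℂ} (hw : w.re < 0) {t : ℝ} (ht : 0 < t) :
    DifferentiableAt ℂ (fun w => Rf M w t) w := by
  have htc : (t : ℂ) ≠ 0 := Complex.ofReal_ne_zero.mpr ht.ne'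
  unfold Rf Lf
  apply DifferentiableAt.sub
  · apply DifferentiableAt.sub (Li_differentiable ht w)
    apply DifferentiableAt.mul
    · exact DifferentiableAt.comp (f := fun w : ℂ => 1 - w) (g := Complex.Gamma) w
        (Complex.differentiableAt_Gamma _ (one_sub_ne_neg_nat (by linarith)))
        (by fun_prop)
    · exact DifferentiableAt.const_cpow (by fun_prop) (Or.inl htc)
  · apply DifferentiableAt.fun_sum
    intro j _
    apply DifferentiableAt.div_const
    apply DifferentiableAt.mul_const
    refine DifferentiableAt.comp (f := fun w : ℂ => w - j) (g := riemannZeta) w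
      (differentiableAt_riemannZeta ?_) (by fun_prop)
    intro h
    have := congrArg Complex.re h
    simp at this
    have : (0 : ℝ) ≤ j := Nat.cast_nonneg j
    linarith

lemma MT_norm_le (k : ℕ) {σ₀ : ℝ} (hσ₀ : 0 ≤ σ₀) {s : ℂ} (hs : σ₀ ≤ s.re) (p : ℕ × ℕ) :
    ‖((p.1 + 1 : ℕ) : ℂ) ^ (-s) * ((p.2 + 1 : ℕ) : ℂ) ^ (-(s - k)) *
      ((p.1 + p.2 + 2 : ℕ) : ℂ) ^ (-(2 * s + k))‖ ≤
    ((p.1 : ℝ) + 1) ^ (-(2 * σ₀)) * ((p.2 : ℝ) + 1) ^ (-(2 * σ₀)) := by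
  rw [norm_mul, norm_mul, Complex.norm_natCast_cpow_of_pos (Nat.succ_pos _),
    Complex.norm_natCast_cpow_of_pos (Nat.succ_pos _),
    Complex.norm_natCast_cpow_of_pos (Nat.succ_pos _)]
  simp only [Complex.neg_re, Complex.sub_re, Complex.add_re, Complex.mul_re, Complex.re_ofNat,
    Complex.im_ofNat, zero_mul, sub_zero, Complex.natCast_re]
  push_cast
  set x : ℝ := (p.1 : ℝ) + 1 with hx
  set y : ℝ := (p.2 : ℝ) + 1 with hy
  have hx1 : 1 ≤ x := by rw [hx]; linarith [(Nat.cast_nonneg p.1 : (0 : ℝ) ≤ p.1)]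
  have hy1 : 1 ≤ y := by rw [hy]; linarith [(Nat.cast_nonneg p.2 : (0 : ℝ) ≤ p.2)]
  have hx0 : 0 < x := by linarith
  have hy0 : 0 < y := by linarith
  have hN : (p.1 : ℝ) + p.2 + 1 + 1 = x + y := by rw [hx, hy]; ring
  rw [hN]
  set σ := s.re
  have hσ : 0 ≤ σ := hσ₀.trans hs
  have hxy : 0 < x + y := by positivity
  have e1 : y ^ (-(σ - k)) = y ^ (-σ) * y ^ (k : ℝ) := by
    rw [← Real.rpow_add hy0]; congr 1; ring
  have e2 : (x + y) ^ (-(2 * σ + k)) = ((x + y) ^ (2 : ℝ)) ^ (-σ) * ((x + y) ^ (k : ℝ))⁻¹ := by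
    rw [← Real.rpow_mul hxy.le, ← Real.rpow_neg hxy.le, ← Real.rpow_add hxy]; congr 1; ring
  have h1 : y ^ (k : ℝ) * ((x + y) ^ (k : ℝ))⁻¹ ≤ 1 := by
    rw [← div_eq_mul_inv, div_le_one (by positivity)]
    exact Real.rpow_le_rpow hy0.le (by linarith) (Nat.cast_nonneg k)
  have h2 : ((x + y) ^ (2 : ℝ)) ^ (-σ) ≤ (x * y) ^ (-σ) := by
    apply Real.rpow_le_rpow_of_nonpos (by positivity) _ (by linarith)
    rw [Real.rpow_two]; nlinarith
  rw [Real.mul_rpow hx0.le hy0.le] at h2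
  calc x ^ (-σ) * y ^ (-(σ - k)) * (x + y) ^ (-(2 * σ + k))
      = x ^ (-σ) * y ^ (-σ) * ((x + y) ^ (2 : ℝ)) ^ (-σ) *
        (y ^ (k : ℝ) * ((x + y) ^ (k : ℝ))⁻¹) := by rw [e1, e2]; ring
    _ ≤ x ^ (-σ) * y ^ (-σ) * (x ^ (-σ) * y ^ (-σ)) * 1 := by gcongr
    _ = x ^ (-(2 * σ)) * y ^ (-(2 * σ)) := by
        rw [show -(2 * σ) = -σ + -σ by ring, Real.rpow_add hx0, Real.rpow_add hy0]; ring
    _ ≤ _ := by gcongr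

lemma summable_pair {σ₀ : ℝ} (h : 1 / 2 < σ₀) : Summable (fun p : ℕ × ℕ =>
    ((p.1 : ℝ) + 1) ^ (-(2 * σ₀)) * ((p.2 : ℝ) + 1) ^ (-(2 * σ₀))) := by
  have h1 : Summable (fun n : ℕ => ((n : ℝ) + 1) ^ (-(2 * σ₀))) := by
    have := summable_shift (x := 1 - 2 * σ₀) (by linarith)
    simpa using this
  exact h1.mul_of_nonneg h1 (fun n => by positivity) (fun n => by positivity)

lemma zetaMT_summable (k : ℕ) {s : ℂ} (hs : 1 / 2 < s.re) : Summable (fun p : ℕ × ℕ =>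
    ((p.1 + 1 : ℕ) : ℂ) ^ (-s) * ((p.2 + 1 : ℕ) : ℂ) ^ (-(s - k)) *
      ((p.1 + p.2 + 2 : ℕ) : ℂ) ^ (-(2 * s + k))) :=
  Summable.of_norm_bounded (summable_pair hs) (MT_norm_le k (by linarith) le_rfl)

lemma zetaMT_differentiableOn (k : ℕ) :
    DifferentiableOn ℂ (fun s => zetaMT s (s - k) (2 * s + k)) {s | 1 / 2 < s.re} := by
  intro s hs
  have hs' : 1 / 2 < s.re := hs
  obtain ⟨σ₀, h1, h2⟩ := exists_between hs'
  have ho : IsOpen {z : ℂ | σ₀ < z.re} := isOpen_lt continuous_const Complex.continuous_re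
  apply DifferentiableAt.differentiableWithinAt
  refine DifferentiableOn.differentiableAt (s := {z : ℂ | σ₀ < z.re}) ?_ (ho.mem_nhds h2)
  refine Complex.differentiableOn_tsum_of_summable_norm (summable_pair h1) ?_ ho ?_
  · intro p z _
    have hne : ∀ n : ℕ, ((n + 1 : ℕ) : ℂ) ≠ 0 := fun n => Nat.cast_ne_zero.mpr (Nat.succ_ne_zero n)
    apply DifferentiableAt.differentiableWithinAt
    refine (DifferentiableAt.mul ?_ ?_).mul ?_
    · exact DifferentiableAt.const_cpow (by fun_prop) (Or.inl (hne _))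
    · exact DifferentiableAt.const_cpow (by fun_prop) (Or.inl (hne _))
    · exact DifferentiableAt.const_cpow (by fun_prop) (Or.inl (hne _))
  · intro p z hz
    exact MT_norm_le k (by linarith) (le_of_lt hz) p

lemma mellin_Li {s a : ℂ} (ha : 0 < a.re) (hsa : 1 < (s + a).re) :
    mellin (Li s) a = Complex.Gamma a * riemannZeta (s + a) := by
  have key : ∀ n : ℕ, ((n + 1 : ℕ) : ℂ) ^ (-s) / (((n + 1 : ℕ) : ℝ) : ℂ) ^ a =
      1 / ((n : ℂ) + 1) ^ (s + a) := by
    intro n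
    have hne : ((n + 1 : ℕ) : ℂ) ≠ 0 := Nat.cast_ne_zero.mpr (Nat.succ_ne_zero n)
    rw [Complex.ofReal_natCast, Complex.cpow_neg, ← Nat.cast_add_one, Complex.cpow_add _ _ hne]
    field_simp
  have h := hasSum_mellin (a := fun n : ℕ => ((n + 1 : ℕ) : ℂ) ^ (-s))
    (p := fun n : ℕ => ((n + 1 : ℕ) : ℝ)) (F := Li s) (s := a) (fun n => Or.inr (by positivity)) ha
    (fun t ht => Li_hasSum s ht) (by
      have := summable_shift (x := 1 - (s + a).re) (by linarith)
      refine this.congr fun n => ?_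
      have hpos : (0 : ℝ) < (n : ℝ) + 1 := by positivity
      rw [Complex.norm_natCast_cpow_of_pos (Nat.succ_pos _), Complex.neg_re, Nat.cast_add_one,
        ← Real.rpow_sub hpos]
      congr 1
      simp; ring)
  rw [← h.tsum_eq, zeta_eq_tsum_one_div_nat_add_one_cpow hsa, ← tsum_mul_left]
  refine tsum_congr fun n => ?_
  rw [mul_div_assoc, key]

lemma mellin_LiLi (k : ℕ) {s : ℂ} (hs : 1 / 2 < s.re) :
    mellin (fun t => Li s t * Li (s - k) t) (2 * s + k) =
      Complex.Gamma (2 * s + k) * zetaMT s (s - k) (2 * s + k) := by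
  have hc : 0 < (2 * s + k).re := by
    simp; have : (0 : ℝ) ≤ k := Nat.cast_nonneg k
    linarith
  have key : ∀ p : ℕ × ℕ, ((p.1 + 1 : ℕ) : ℂ) ^ (-s) * ((p.2 + 1 : ℕ) : ℂ) ^ (-(s - k)) /
      (((p.1 + p.2 + 2 : ℕ) : ℝ) : ℂ) ^ (2 * s + k) =
      ((p.1 + 1 : ℕ) : ℂ) ^ (-s) * ((p.2 + 1 : ℕ) : ℂ) ^ (-(s - k)) *
      ((p.1 + p.2 + 2 : ℕ) : ℂ) ^ (-(2 * s + k)) := by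
    intro p
    rw [Complex.ofReal_natCast, Complex.cpow_neg _ (2 * s + k), div_eq_mul_inv]
  have hF : ∀ t ∈ Set.Ioi (0 : ℝ), HasSum (fun p : ℕ × ℕ =>
      (((p.1 + 1 : ℕ) : ℂ) ^ (-s) * ((p.2 + 1 : ℕ) : ℂ) ^ (-(s - k))) *
        ((Real.exp (-((p.1 + p.2 + 2 : ℕ) : ℝ) * t) : ℝ) : ℂ)) (Li s t * Li (s - k) t) := by
    intro t ht
    have hs1 := summable_mul_of_summable_norm
      (f := fun n : ℕ => ((n + 1 : ℕ) : ℂ) ^ (-s) * ((Real.exp (-((n + 1 : ℕ) : ℝ) * t) : ℝ) : ℂ))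
      (g := fun n : ℕ => ((n + 1 : ℕ) : ℂ) ^ (-(s - k)) *
        ((Real.exp (-((n + 1 : ℕ) : ℝ) * t) : ℝ) : ℂ)) (Li_summable s ht) (Li_summable (s - k) ht)
    have h1 := (Li_hasSum s ht).mul (Li_hasSum (s - k) ht) hs1
    have heq : (fun p : ℕ × ℕ =>
      (((p.1 + 1 : ℕ) : ℂ) ^ (-s) * ((p.2 + 1 : ℕ) : ℂ) ^ (-(s - k))) *
        ((Real.exp (-((p.1 + p.2 + 2 : ℕ) : ℝ) * t) : ℝ) : ℂ)) = fun p : ℕ × ℕ =>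
        (((p.1 + 1 : ℕ) : ℂ) ^ (-s) * ((Real.exp (-((p.1 + 1 : ℕ) : ℝ) * t) : ℝ) : ℂ)) *
        (((p.2 + 1 : ℕ) : ℂ) ^ (-(s - k)) * ((Real.exp (-((p.2 + 1 : ℕ) : ℝ) * t) : ℝ) : ℂ)) := by
      funext p
      have h3 : Real.exp (-((p.1 + p.2 + 2 : ℕ) : ℝ) * t) = Real.exp (-((p.1 + 1 : ℕ) : ℝ) * t) *
          Real.exp (-((p.2 + 1 : ℕ) : ℝ) * t) := by
        rw [← Real.exp_add]; congr 1; push_cast; ring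
      rw [h3, Complex.ofReal_mul]; ring
    rw [heq]
    exact h1
  have hsm : Summable (fun p : ℕ × ℕ =>
      ‖((p.1 + 1 : ℕ) : ℂ) ^ (-s) * ((p.2 + 1 : ℕ) : ℂ) ^ (-(s - k))‖ /
        ((p.1 + p.2 + 2 : ℕ) : ℝ) ^ (2 * s + k).re) := by
    refine (zetaMT_summable k hs).norm.congr fun p => ?_
    have hp : (0 : ℝ) < ((p.1 + p.2 + 2 : ℕ) : ℝ) := Nat.cast_pos.mpr (by omega)
    rw [← key, norm_div, Complex.norm_cpow_eq_rpow_re_of_pos hp]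
  have h := hasSum_mellin
    (a := fun p : ℕ × ℕ => ((p.1 + 1 : ℕ) : ℂ) ^ (-s) * ((p.2 + 1 : ℕ) : ℂ) ^ (-(s - k)))
    (p := fun p : ℕ × ℕ => ((p.1 + p.2 + 2 : ℕ) : ℝ)) (F := fun t => Li s t * Li (s - k) t)
    (s := 2 * s + k) (fun n => Or.inr (Nat.cast_pos.mpr (by omega))) hc hF hsm
  rw [← h.tsum_eq, zetaMT, ← tsum_mul_left]
  refine tsum_congr fun p => ?_
  rw [mul_div_assoc, key]

lemma Gamma_add_nat {c : ℂ} (hc : 0 < c.re) (j : ℕ) :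
    Complex.Gamma (c + j) = (∏ i ∈ Finset.range j, (c + i)) * Complex.Gamma c := by
  induction j with
  | zero => simp
  | succ j ih =>
    rw [Finset.prod_range_succ, Nat.cast_succ, ← add_assoc, Complex.Gamma_add_one, ih]
    · ring
    · intro h
      have := congrArg Complex.re h
      simp at this
      have : (0 : ℝ) ≤ j := Nat.cast_nonneg j
      linarith

lemma integrableOn_Li {s a : ℂ} (hs : 0 ≤ s.re) (ha : 1 < a.re) :
    MeasureTheory.IntegrableOn (fun t : ℝ => (t : ℂ) ^ (a - 1) * Li s t) (Set.Ioi 0) := by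
  obtain ⟨C, hC0, hC⟩ := Li_norm_le 0
  have hi : MeasureTheory.IntegrableOn (fun t : ℝ => C * (t ^ (a.re - 2) * Real.exp (-(1 / 2) * t)))
      (Set.Ioi 0) := by
    refine MeasureTheory.Integrable.const_mul ?_ C
    exact integrableOn_rpow_mul_exp_neg_mul_rpow (s := a.re - 2) (p := 1) (b := 1 / 2) (by linarith) one_pos
      (by norm_num) |>.congr_fun (fun t ht => by simp) measurableSet_Ioi
  refine MeasureTheory.Integrable.mono' hi ?_ ?_
  · apply ContinuousOn.aestronglyMeasurable _ measurableSet_Ioi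
    apply ContinuousOn.mul
    · intro t ht
      exact (Complex.continuousAt_ofReal_cpow_const t _ (Or.inr (ne_of_gt ht))).continuousWithinAt
    · exact Li_continuousOn s
  · filter_upwards [MeasureTheory.ae_restrict_mem measurableSet_Ioi] with t ht
    have ht' : 0 < t := ht
    rw [norm_mul, Complex.norm_cpow_eq_rpow_re_of_pos ht]
    calc t ^ (a - 1).re * ‖Li s t‖ ≤ t ^ (a - 1).re * (C / t ^ (0 + 1) * Real.exp (-t / 2)) := by
          gcongr; exact hC s (by simpa using hs) t ht
      _ = _ := by
          rw [show a.re - 2 = (a - 1).re - 1 by simp; ring, Real.rpow_sub ht' _ 1, Real.rpow_one,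
            show -t / 2 = -(1 / 2) * t by ring]
          ring

lemma E_bound (k ℓ : ℕ) (hk : 1 ≤ k) {s₀ : ℂ} (h1 : -((ℓ : ℝ) + 1) < s₀.re) (h2 : s₀.re < 1) :
    ∃ V ∈ 𝓝 s₀, ∃ bound : ℝ → ℝ, MeasureTheory.IntegrableOn bound (Set.Ioi 0) ∧
      ∀ t : ℝ, 0 < t → ∀ s ∈ V,
      ‖(t : ℂ) ^ (2 * s + k - 1) * (Li s t * Rf (3 * ℓ + 5) (s - k) t)‖ ≤ bound t := by
  have hk' : (1 : ℝ) ≤ k := by exact_mod_cast hk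
  obtain ⟨C, hC0, hC⟩ := Li_norm_le (ℓ + 1)
  obtain ⟨D, hD0, hD⟩ := Rf_loc_bound (3 * ℓ + 5) (w₀ := s₀ - k) (by simp; linarith)
  have hcont : Tendsto (fun w : ℂ => w - k) (𝓝 s₀) (𝓝 (s₀ - k)) :=
    (continuous_id.sub continuous_const).tendsto _
  have e1 : ∀ᶠ s : ℂ in 𝓝 s₀, s.re < 1 :=
    (Complex.continuous_re.continuousAt).eventually_lt continuousAt_const h2
  have e2 : ∀ᶠ s : ℂ in 𝓝 s₀, -((ℓ : ℝ) + 1) < s.re :=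
    continuousAt_const.eventually_lt (Complex.continuous_re.continuousAt) h1
  refine ⟨_, ((hcont.eventually hD).and (e1.and e2)), fun t => C * D * (t ^ (k : ℝ) * Real.exp (-(1 / 2) * t)
    + t ^ ((k : ℝ) + 2 * ℓ + 4) * Real.exp (-(1 / 2) * t)), ?_, ?_⟩
  · have hint : ∀ q : ℝ, 0 ≤ q → MeasureTheory.IntegrableOn (fun t : ℝ => t ^ q * Real.exp (-(1 / 2) * t))
      (Set.Ioi 0) := fun q hq => integrableOn_rpow_mul_exp_neg_mul_rpow (s := q) (p := 1) (b := 1 / 2) (by linarith) one_pos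
      (by norm_num) |>.congr_fun (fun t ht => by simp) measurableSet_Ioi
    refine MeasureTheory.Integrable.const_mul ?_ _
    exact (hint _ (by positivity)).add (hint _ (by positivity))
  · rintro t ht s ⟨hs1, hs2, hs3⟩
    rw [norm_mul, norm_mul, Complex.norm_cpow_eq_rpow_re_of_pos ht]
    have hL := hC s (by push_cast; linarith) t ht
    have hR := hs1 t ht
    set σ := s.re with hσ
    have hre : (2 * s + k - 1).re = 2 * σ + k - 1 := by simp [hσ]
    rw [hre]
    have hpow : t ^ (2 * σ + k - 1) * (t ^ (3 * ℓ + 5) / t ^ (ℓ + 1 + 1)) =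
        t ^ (2 * σ + k + 2 * ℓ + 2) := by
      rw [← Real.rpow_natCast, ← Real.rpow_natCast, ← Real.rpow_sub ht, ← Real.rpow_add ht]
      congr 1; push_cast; ring
    have hmono : t ^ (2 * σ + k + 2 * ℓ + 2) ≤ t ^ (k : ℝ) + t ^ ((k : ℝ) + 2 * ℓ + 4) := by
      rcases le_total t 1 with h | h
      · have := Real.rpow_le_rpow_of_exponent_ge ht h
          (show (k : ℝ) ≤ 2 * σ + k + 2 * ℓ + 2 by linarith)
        have : 0 < t ^ ((k : ℝ) + 2 * ℓ + 4) := by positivity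
        linarith
      · have := Real.rpow_le_rpow_of_exponent_le h
          (show 2 * σ + k + 2 * ℓ + 2 ≤ (k : ℝ) + 2 * ℓ + 4 by linarith)
        have : 0 < t ^ (k : ℝ) := by positivity
        linarith
    calc t ^ (2 * σ + k - 1) * (‖Li s t‖ * ‖Rf (3 * ℓ + 5) (s - k) t‖)
        ≤ t ^ (2 * σ + k - 1) * ((C / t ^ (ℓ + 1 + 1) * Real.exp (-t / 2)) *
          (D * t ^ (3 * ℓ + 5))) := by gcongr
      _ = C * D * (t ^ (2 * σ + k - 1) * (t ^ (3 * ℓ + 5) / t ^ (ℓ + 1 + 1))) *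
          Real.exp (-t / 2) := by ring
      _ = C * D * t ^ (2 * σ + k + 2 * ℓ + 2) * Real.exp (-t / 2) := by rw [hpow]
      _ ≤ C * D * (t ^ (k : ℝ) + t ^ ((k : ℝ) + 2 * ℓ + 4)) * Real.exp (-t / 2) := by gcongr
      _ = _ := by rw [show -t / 2 = -(1 / 2) * t by ring]; ring

lemma E_meas (k M : ℕ) (hk : 1 ≤ k) {s : ℂ} (h2 : s.re < 1) :
    MeasureTheory.AEStronglyMeasurable (fun t : ℝ =>
      (t : ℂ) ^ (2 * s + k - 1) * (Li s t * Rf M (s - k) t))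
      (MeasureTheory.volume.restrict (Set.Ioi 0)) := by
  have hk' : (1 : ℝ) ≤ k := by exact_mod_cast hk
  apply ContinuousOn.aestronglyMeasurable _ measurableSet_Ioi
  apply ContinuousOn.mul
  · intro t ht
    exact (Complex.continuousAt_ofReal_cpow_const t _ (Or.inr (ne_of_gt ht))).continuousWithinAt
  · exact (Li_continuousOn s).mul (Rf_continuousOn M (by simp; linarith))

noncomputable def Ef (k ℓ : ℕ) (s : ℂ) : ℂ := ∫ t in Set.Ioi (0 : ℝ),
  (t : ℂ) ^ (2 * s + k - 1) * (Li s t * Rf (3 * ℓ + 5) (s - k) t)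

lemma Ef_differentiableOn (k ℓ : ℕ) (hk : 1 ≤ k) :
    DifferentiableOn ℂ (Ef k ℓ) {s | -((ℓ : ℝ) + 1) < s.re ∧ s.re < 1} := by
  have hk' : (1 : ℝ) ≤ k := by exact_mod_cast hk
  have hU : IsOpen {s : ℂ | -((ℓ : ℝ) + 1) < s.re ∧ s.re < 1} :=
    (isOpen_lt continuous_const Complex.continuous_re).inter
      (isOpen_lt Complex.continuous_re continuous_const)
  apply differentiableOn_integral_param hU
  · intro s hs
    exact E_meas k _ hk hs.2
  · filter_upwards [MeasureTheory.ae_restrict_mem measurableSet_Ioi] with t ht s hs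
    have ht' : 0 < t := ht
    have htc : (t : ℂ) ≠ 0 := Complex.ofReal_ne_zero.mpr (ne_of_gt ht')
    apply DifferentiableAt.differentiableWithinAt
    apply DifferentiableAt.mul
    · exact DifferentiableAt.const_cpow (by fun_prop) (Or.inl htc)
    · apply DifferentiableAt.mul (Li_differentiable ht s)
      refine DifferentiableAt.comp (f := fun s : ℂ => s - k) (g := fun w => Rf (3 * ℓ + 5) w t) s ?_
        (by fun_prop)
      refine Rf_differentiableAt _ ?_ ht
      have := hs.2
      simp; linarith
  · intro s₀ hs₀
    obtain ⟨V, hV, b, hb, h⟩ := E_bound k ℓ hk hs₀.1 hs₀.2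
    refine ⟨V, hV, b, hb, ?_⟩
    filter_upwards [MeasureTheory.ae_restrict_mem measurableSet_Ioi] with t ht using h t ht

noncomputable def Af (k : ℕ) (s : ℂ) : ℂ := Complex.Gamma (3 * s - 1) *
  (Complex.Gamma (1 - (s - k)) * (Complex.Gamma (2 * s + k))⁻¹ * riemannZeta (4 * s - 1))

noncomputable def Bf (k j : ℕ) (s : ℂ) : ℂ := riemannZeta (3 * s + k + j) *
  ((∏ i ∈ Finset.range j, (2 * s + k + i)) * ((-1) ^ j / (j.factorial : ℂ)) * riemannZeta (s - k - j))

lemma main_identity (k ℓ : ℕ) (hk : 1 ≤ k) {s : ℂ} (h1 : 3 / 4 < s.re) (h2 : s.re < 1) :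
    zetaMT s (s - k) (2 * s + k) = Af k s + ∑ j ∈ Finset.range (3 * ℓ + 5), Bf k j s +
      (Complex.Gamma (2 * s + k))⁻¹ * Ef k ℓ s := by
  have hk' : (1 : ℝ) ≤ k := by exact_mod_cast hk
  have hc : 0 < (2 * s + k).re := by simp; linarith
  have hG : Complex.Gamma (2 * s + k) ≠ 0 := Complex.Gamma_ne_zero_of_re_pos hc
  have hm := mellin_LiLi k (s := s) (by linarith)
  have hIA := integrableOn_Li (s := s) (a := 3 * s - 1) (by linarith) (by simp; linarith)
  have hIB : ∀ j : ℕ, MeasureTheory.IntegrableOn (fun t : ℝ => (t : ℂ) ^ ((2 * s + k + j) - 1) * Li s t)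
    (Set.Ioi 0) := fun j => integrableOn_Li (by linarith) (by
      have : (0 : ℝ) ≤ j := Nat.cast_nonneg j
      simp; linarith)
  have hIE : MeasureTheory.IntegrableOn (fun t : ℝ =>
      (t : ℂ) ^ (2 * s + k - 1) * (Li s t * Rf (3 * ℓ + 5) (s - k) t)) (Set.Ioi 0) := by
    have hl : (0 : ℝ) ≤ ℓ := Nat.cast_nonneg ℓ
    obtain ⟨V, hV, b, hb, h⟩ := E_bound k ℓ hk (s₀ := s) (by linarith) h2
    refine MeasureTheory.Integrable.mono' hb (E_meas k _ hk h2) ?_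
    filter_upwards [MeasureTheory.ae_restrict_mem measurableSet_Ioi] with t ht using
      h t ht s (mem_of_mem_nhds hV)
  have hsplit : mellin (fun t => Li s t * Li (s - k) t) (2 * s + k) =
      Complex.Gamma (1 - (s - k)) * mellin (Li s) (3 * s - 1) +
      ∑ j ∈ Finset.range (3 * ℓ + 5), (riemannZeta (s - k - j) * ((-1) ^ j / (j.factorial : ℂ))) *
        mellin (Li s) (2 * s + k + j) + Ef k ℓ s := by
    unfold mellin Ef
    simp only [smul_eq_mul]
    simp_rw [← MeasureTheory.integral_const_mul]
    have hI1 : MeasureTheory.IntegrableOn (fun t : ℝ => Complex.Gamma (1 - (s - k)) *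
        ((t : ℂ) ^ (3 * s - 1 - 1) * Li s t)) (Set.Ioi 0) := hIA.const_mul _
    have hI2 : MeasureTheory.IntegrableOn (fun t : ℝ => ∑ j ∈ Finset.range (3 * ℓ + 5),
        riemannZeta (s - k - j) * ((-1) ^ j / (j.factorial : ℂ)) *
        ((t : ℂ) ^ (2 * s + k + j - 1) * Li s t)) (Set.Ioi 0) :=
      MeasureTheory.integrable_finsetSum _ (fun j _ => (hIB j).const_mul _)
    have hI3 : MeasureTheory.IntegrableOn (fun t : ℝ => Complex.Gamma (1 - (s - k)) *
        ((t : ℂ) ^ (3 * s - 1 - 1) * Li s t) + ∑ j ∈ Finset.range (3 * ℓ + 5),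
        riemannZeta (s - k - j) * ((-1) ^ j / (j.factorial : ℂ)) *
        ((t : ℂ) ^ (2 * s + k + j - 1) * Li s t)) (Set.Ioi 0) := hI1.add hI2
    rw [← MeasureTheory.integral_finsetSum _ (fun j _ => (hIB j).const_mul _),
      ← MeasureTheory.integral_add hI1 hI2, ← MeasureTheory.integral_add hI3 hIE]
    refine MeasureTheory.setIntegral_congr_fun measurableSet_Ioi (fun t ht => ?_)
    have ht' : 0 < t := ht
    have htc : (t : ℂ) ≠ 0 := Complex.ofReal_ne_zero.mpr (ne_of_gt ht')
    have hA : (t : ℂ) ^ (3 * s - 1 - 1) = (t : ℂ) ^ (2 * s + k - 1) * (t : ℂ) ^ (s - k - 1) := by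
      rw [← Complex.cpow_add _ _ htc]; congr 1; ring
    have hB : ∀ j : ℕ, (t : ℂ) ^ (2 * s + k + j - 1) = (t : ℂ) ^ (2 * s + k - 1) * (t : ℂ) ^ j := by
      intro j
      rw [← Complex.cpow_natCast, ← Complex.cpow_add _ _ htc]; congr 1; ring
    have hLi : Li (s - k) t = Complex.Gamma (1 - (s - k)) * (t : ℂ) ^ (s - k - 1) +
      ∑ j ∈ Finset.range (3 * ℓ + 5), riemannZeta (s - k - j) * (-(t : ℂ)) ^ j / (j.factorial : ℂ)
        + Rf (3 * ℓ + 5) (s - k) t := by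
      rw [Rf, Lf]; ring
    rw [hA]
    simp_rw [hB]
    have hS : ∑ j ∈ Finset.range (3 * ℓ + 5), riemannZeta (s - k - j) * ((-1) ^ j / (j.factorial : ℂ)) *
        ((t : ℂ) ^ (2 * s + k - 1) * (t : ℂ) ^ j * Li s t) = (t : ℂ) ^ (2 * s + k - 1) * (Li s t *
        ∑ j ∈ Finset.range (3 * ℓ + 5), riemannZeta (s - k - j) * (-(t : ℂ)) ^ j / (j.factorial : ℂ)) := by
      rw [Finset.mul_sum, Finset.mul_sum]
      refine Finset.sum_congr rfl fun j _ => ?_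
      rw [neg_pow (t : ℂ) j]; ring
    rw [hS]
    generalize ∑ j ∈ Finset.range (3 * ℓ + 5), riemannZeta (s - k - j) * (-(t : ℂ)) ^ j / (j.factorial : ℂ) = S at hLi ⊢
    rw [hLi]
    ring
  rw [hm, mellin_Li (by simp; linarith) (by simp; linarith)] at hsplit
  have hB2 : ∑ j ∈ Finset.range (3 * ℓ + 5), (riemannZeta (s - k - j) * ((-1) ^ j / (j.factorial : ℂ))) *
        mellin (Li s) (2 * s + k + j) = Complex.Gamma (2 * s + k) *
        ∑ j ∈ Finset.range (3 * ℓ + 5), Bf k j s := by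
    rw [Finset.mul_sum]
    refine Finset.sum_congr rfl fun j _ => ?_
    have : (0 : ℝ) ≤ j := Nat.cast_nonneg j
    rw [mellin_Li (by simp; linarith) (by simp; linarith), Gamma_add_nat hc, Bf,
      show s + (2 * s + k + j) = 3 * s + k + j by ring]
    ring
  rw [hB2, show s + (3 * s - 1) = 4 * s - 1 by ring] at hsplit
  apply mul_left_cancel₀ hG
  rw [hsplit, Af]
  have hGi := mul_inv_cancel₀ hG
  generalize (Complex.Gamma (2 * s + k))⁻¹ = gi at hGi ⊢
  linear_combination (-(Complex.Gamma (1 - (s - k)) * Complex.Gamma (3 * s - 1) *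
    riemannZeta (4 * s - 1)) - Ef k ℓ s) * hGi

/-- `f` agrees near `x` (away from `x`) with a function analytic at `x`. -/
def HolAt (f : ℂ → ℂ) (x : ℂ) : Prop := ∃ G : ℂ → ℂ, AnalyticAt ℂ G x ∧ f =ᶠ[𝓝[≠] x] G

lemma AnalyticAt.holAt {f : ℂ → ℂ} {x : ℂ} (h : AnalyticAt ℂ f x) : HolAt f x :=
  ⟨f, h, EventuallyEq.rfl⟩

lemma HolAt.congr {f g : ℂ → ℂ} {x : ℂ} (h : HolAt f x) (e : g =ᶠ[𝓝[≠] x] f) : HolAt g x := by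
  obtain ⟨G, hG, he⟩ := h
  exact ⟨G, hG, e.trans he⟩

lemma HolAt.add {f g : ℂ → ℂ} {x : ℂ} (hf : HolAt f x) (hg : HolAt g x) :
    HolAt (fun s => f s + g s) x := by
  obtain ⟨G, hG, he⟩ := hf
  obtain ⟨G', hG', he'⟩ := hg
  exact ⟨_, hG.add hG', he.add he'⟩

lemma HolAt.mul {f g : ℂ → ℂ} {x : ℂ} (hf : HolAt f x) (hg : HolAt g x) :
    HolAt (fun s => f s * g s) x := by
  obtain ⟨G, hG, he⟩ := hf
  obtain ⟨G', hG', he'⟩ := hg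
  exact ⟨_, hG.mul hG', he.mul he'⟩

lemma HolAt.sum {ι : Type*} (S : Finset ι) {f : ι → ℂ → ℂ} {x : ℂ} (hf : ∀ i ∈ S, HolAt (f i) x) :
    HolAt (fun s => ∑ i ∈ S, f i s) x := by
  classical
  induction S using Finset.induction_on with
  | empty => simpa using (analyticAt_const (v := (0 : ℂ))).holAt
  | insert a S ha ih =>
    have h1 := (hf a (Finset.mem_insert_self a S)).add
      (ih fun i hi => hf i (Finset.mem_insert_of_mem hi))
    simpa [Finset.sum_insert ha] using h1

lemma eventually_ne_punct (x : ℂ) : ∀ᶠ s in 𝓝[≠] x, s - x ≠ 0 := by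
  filter_upwards [self_mem_nhdsWithin] with s hs
  exact sub_ne_zero.mpr hs

lemma analytic_factor {g : ℂ → ℂ} {x : ℂ} (hg : AnalyticAt ℂ g x) (h0 : g x = 0) :
    ∃ h : ℂ → ℂ, AnalyticAt ℂ h x ∧ ∀ s, g s = (s - x) * h s := by
  obtain ⟨p, hp⟩ := hg
  refine ⟨dslope g x, ⟨_, hp.has_fpower_series_dslope_fslope⟩, fun s => ?_⟩
  have := sub_smul_dslope g x s
  rw [smul_eq_mul, h0, sub_zero] at this
  exact this.symm

lemma HolAt.mul_of_zero {f g : ℂ → ℂ} {x : ℂ} (hf : HolAt (fun s => (s - x) * f s) x)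
    (hg : AnalyticAt ℂ g x) (h0 : g x = 0) : HolAt (fun s => f s * g s) x := by
  obtain ⟨h, hh, he⟩ := analytic_factor hg h0
  refine (hf.mul hh.holAt).congr (Eventually.of_forall fun s => ?_)
  simp only [he s]; ring

lemma HolAt.of_tendsto {f : ℂ → ℂ} {x : ℂ} (hf : HolAt (fun s => (s - x) * f s) x)
    (h0 : Tendsto (fun s => (s - x) * f s) (𝓝[≠] x) (𝓝 0)) : HolAt f x := by
  obtain ⟨G, hG, he⟩ := hf
  have h1 : Tendsto G (𝓝[≠] x) (𝓝 (G x)) := hG.continuousAt.tendsto.mono_left nhdsWithin_le_nhds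
  have h2 : G x = 0 := tendsto_nhds_unique h1 (h0.congr' he)
  obtain ⟨h, hh, hfac⟩ := analytic_factor hG h2
  refine ⟨h, hh, ?_⟩
  filter_upwards [he, eventually_ne_punct x] with s hs hne
  have := hs.trans (hfac s)
  exact mul_left_cancel₀ hne this

lemma HolAt.comp_affine {f : ℂ → ℂ} {a b x : ℂ} (ha : a ≠ 0) (hf : HolAt f (a * x + b)) :
    HolAt (fun s => f (a * s + b)) x := by
  obtain ⟨G, hG, he⟩ := hf
  refine ⟨fun s => G (a * s + b), ?_, ?_⟩
  · exact AnalyticAt.fun_comp (g := G) (f := fun s => a * s + b) hG (by fun_prop)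
  · have ht : Tendsto (fun s : ℂ => a * s + b) (𝓝[≠] x) (𝓝[≠] (a * x + b)) := by
      apply tendsto_nhdsWithin_of_tendsto_nhds_of_eventually_within
      · exact (Continuous.tendsto (by fun_prop) x).mono_left nhdsWithin_le_nhds
      · filter_upwards [self_mem_nhdsWithin] with s hs h
        apply hs
        have h' : a * s + b = a * x + b := h
        exact mul_left_cancel₀ ha (add_right_cancel h')
    exact ht.eventually he

lemma Gamma_analyticAt {z : ℂ} (h : ∀ m : ℕ, z ≠ -m) : AnalyticAt ℂ Complex.Gamma z := by
  have h1 : AnalyticAt ℂ (fun z => (Complex.Gamma z)⁻¹) z :=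
    Complex.differentiable_one_div_Gamma.analyticAt z
  have := h1.inv (inv_ne_zero (Complex.Gamma_ne_zero h))
  exact this.congr (Eventually.of_forall fun s => by simp)

lemma gamma_pole (n : ℕ) : HolAt (fun z => (z + n) * Complex.Gamma z) (-(n : ℂ)) := by
  induction n with
  | zero =>
    refine (AnalyticAt.holAt (f := fun z => Complex.Gamma (z + 1)) ?_).congr ?_
    · refine AnalyticAt.fun_comp (g := Complex.Gamma) (f := fun z => z + 1) (Gamma_analyticAt ?_)
        (by fun_prop)
      intro m h
      have := congrArg Complex.re h
      simp at this
      linarith [(Nat.cast_nonneg m : (0 : ℝ) ≤ m)]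
    · filter_upwards [self_mem_nhdsWithin] with z hz
      have hz' : z ≠ 0 := by simpa using hz
      simp [Complex.Gamma_add_one z hz']
  | succ n ih =>
    have h1 : HolAt (fun z => (1 * z + 1 + n) * Complex.Gamma (1 * z + 1)) (-((n + 1 : ℕ) : ℂ)) := by
      apply HolAt.comp_affine (f := fun z => (z + n) * Complex.Gamma z) one_ne_zero
      rw [show 1 * -((n + 1 : ℕ) : ℂ) + 1 = -(n : ℂ) by push_cast; ring]
      exact ih
    have hne : -((n + 1 : ℕ) : ℂ) ≠ 0 := neg_ne_zero.mpr (Nat.cast_ne_zero.mpr (Nat.succ_ne_zero n))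
    have h2 : AnalyticAt ℂ (fun z : ℂ => z⁻¹) (-((n + 1 : ℕ) : ℂ)) := analyticAt_id.inv hne
    refine (h1.mul h2.holAt).congr ?_
    have hz0 : ∀ᶠ z : ℂ in 𝓝[≠] (-((n + 1 : ℕ) : ℂ)), z ≠ 0 :=
      (continuousAt_id.eventually_ne hne).filter_mono nhdsWithin_le_nhds
    filter_upwards [hz0] with z hz
    rw [one_mul, Complex.Gamma_add_one z hz]
    push_cast
    field_simp
    ring

lemma zeta_analyticAt {z : ℂ} (hz : z ≠ 1) : AnalyticAt ℂ riemannZeta z :=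
  differentiableOn_riemannZeta.analyticAt (isOpen_compl_singleton.mem_nhds hz)

lemma zeta_pole : HolAt (fun z => (z - 1) * riemannZeta z) 1 := by
  refine ⟨Function.update (fun z => (z - 1) * riemannZeta z) 1 1, ?_, ?_⟩
  · apply Complex.analyticAt_of_differentiable_on_punctured_nhds_of_continuousAt
    · filter_upwards [self_mem_nhdsWithin] with z hz
      have hz' : z ≠ 1 := hz
      have : DifferentiableAt ℂ (fun z => (z - 1) * riemannZeta z) z :=
        DifferentiableAt.mul (by fun_prop) (differentiableAt_riemannZeta hz')
      refine this.congr_of_eventuallyEq ?_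
      filter_upwards [isOpen_compl_singleton.mem_nhds hz] with w hw
      exact Function.update_of_ne hw _ _
    · rw [continuousAt_update_same]
      exact riemannZeta_residue_one
  · filter_upwards [self_mem_nhdsWithin] with z hz
    exact (Function.update_of_ne (show z ≠ 1 from hz) (1 : ℂ)
      (fun z : ℂ => (z - 1) * riemannZeta z)).symm

lemma HolAt.meromorphicAt {f : ℂ → ℂ} {x : ℂ} (h : HolAt f x) : MeromorphicAt f x := by
  obtain ⟨G, hG, he⟩ := h
  exact hG.meromorphicAt.congr he.symm

lemma zeta_meromorphicAt (z : ℂ) : MeromorphicAt riemannZeta z := by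
  by_cases hz : z = 1
  · subst hz
    have h1 := zeta_pole.meromorphicAt
    have h2 : MeromorphicAt (fun z : ℂ => (z - 1)⁻¹) 1 :=
      (AnalyticAt.meromorphicAt (f := fun z : ℂ => z - 1) (by fun_prop)).inv
    refine (h2.mul h1).congr ?_
    filter_upwards [eventually_ne_punct 1] with s hs
    simp only [Pi.mul_apply]
    rw [← mul_assoc, inv_mul_cancel₀ hs, one_mul]
  · exact (zeta_analyticAt hz).meromorphicAt

lemma mero_identity {f g : ℂ → ℂ} {U : Set ℂ} (hU : IsPreconnected U) (hf : MeromorphicOn f U)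
    (hg : MeromorphicOn g U) {x y : ℂ} (hx : x ∈ U) (hy : y ∈ U) (h : f =ᶠ[𝓝[≠] x] g) :
    f =ᶠ[𝓝[≠] y] g := by
  have hd : MeromorphicOn (f - g) U := hf.sub hg
  have h1 : meromorphicOrderAt (f - g) x = ⊤ := by
    rw [meromorphicOrderAt_eq_top_iff]
    filter_upwards [h] with z hz
    simp [hz]
  have h2 : meromorphicOrderAt (f - g) y = ⊤ := by
    by_contra hne
    exact hd.meromorphicOrderAt_ne_top_of_isPreconnected hU hy hx hne h1
  rw [meromorphicOrderAt_eq_top_iff] at h2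
  filter_upwards [h2] with z hz
  exact sub_eq_zero.mp hz

noncomputable def Hf (k ℓ : ℕ) (s : ℂ) : ℂ := Af k s + ∑ j ∈ Finset.range (3 * ℓ + 5), Bf k j s +
      (Complex.Gamma (2 * s + k))⁻¹ * Ef k ℓ s

lemma invGamma_analyticAt (k : ℕ) (x : ℂ) :
    AnalyticAt ℂ (fun s : ℂ => (Complex.Gamma (2 * s + k))⁻¹) x :=
  AnalyticAt.fun_comp (g := fun z => (Complex.Gamma z)⁻¹) (f := fun s : ℂ => 2 * s + k)
    (Complex.differentiable_one_div_Gamma.analyticAt _) (by fun_prop)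

lemma Ef_analyticAt (k ℓ : ℕ) (hk : 1 ≤ k) {s : ℂ} (h1 : -((ℓ : ℝ) + 1) < s.re) (h2 : s.re < 1) :
    AnalyticAt ℂ (Ef k ℓ) s :=
  (Ef_differentiableOn k ℓ hk).analyticAt (IsOpen.mem_nhds
    ((isOpen_lt continuous_const Complex.continuous_re).inter
      (isOpen_lt Complex.continuous_re continuous_const)) ⟨h1, h2⟩)

lemma Hf_mero (k ℓ : ℕ) (hk : 1 ≤ k) :
    MeromorphicOn (Hf k ℓ) {s : ℂ | -((ℓ : ℝ) + 1) < s.re ∧ s.re < 1} := by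
  intro s hs
  have hz : ∀ a b : ℂ, MeromorphicAt (fun s : ℂ => riemannZeta (a * s + b)) s := fun a b =>
    MeromorphicAt.comp_analyticAt (f := riemannZeta) (g := fun s : ℂ => a * s + b)
      (zeta_meromorphicAt _) (by fun_prop)
  have hG : ∀ a b : ℂ, MeromorphicAt (fun s : ℂ => Complex.Gamma (a * s + b)) s := fun a b =>
    MeromorphicAt.comp_analyticAt (f := Complex.Gamma) (g := fun s : ℂ => a * s + b)
      (Meromorphic.Gamma _) (by fun_prop)
  have hGi := (invGamma_analyticAt k s).meromorphicAt
  have hE := (Ef_analyticAt k ℓ hk hs.1 hs.2).meromorphicAt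
  have hA : MeromorphicAt (Af k) s := by
    have e : Af k = fun s => Complex.Gamma (3 * s + -1) * (Complex.Gamma ((-1) * s + (1 + k)) *
        (Complex.Gamma (2 * s + k))⁻¹ * riemannZeta (4 * s + -1)) := by
      funext s
      rw [Af, sub_eq_add_neg, sub_eq_add_neg (4 * s),
        show 1 - (s - k) = (-1) * s + (1 + k) by ring]
    rw [e]
    exact (hG _ _).mul (((hG _ _).mul hGi).mul (hz _ _))
  have hB : ∀ j, MeromorphicAt (Bf k j) s := by
    intro j
    have e : Bf k j = fun s => riemannZeta (3 * s + (k + j)) *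
        ((∏ i ∈ Finset.range j, (2 * s + k + i)) * ((-1) ^ j / (j.factorial : ℂ)) *
          riemannZeta (1 * s + (-k - j))) := by
      funext s
      rw [Bf, add_assoc, show s - k - j = 1 * s + (-k - j : ℂ) by ring]
    rw [e]
    have hp : AnalyticAt ℂ (fun s : ℂ => (∏ i ∈ Finset.range j, (2 * s + k + i)) *
      ((-1) ^ j / (j.factorial : ℂ))) s := by
      apply AnalyticAt.mul _ analyticAt_const
      exact Finset.analyticAt_fun_prod _ (fun i _ => by fun_prop)
    exact (hz _ _).mul (hp.meromorphicAt.mul (hz _ _))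
  have hS : MeromorphicAt (fun s => ∑ j ∈ Finset.range (3 * ℓ + 5), Bf k j s) s :=
    MeromorphicAt.fun_sum (fun j _ => hB j)
  exact (hA.add hS).add (hGi.mul hE)

lemma convex_strip (a b : ℝ) : Convex ℝ {s : ℂ | a < s.re ∧ s.re < b} :=
  (convex_halfSpace_re_gt a).inter (convex_halfSpace_re_lt b)

lemma F_eq_Hf (k : ℕ) (hk : 1 ≤ k) (F : ℂ → ℂ) (hmero : MeromorphicOn F Set.univ)
    (hser : ∀ s : ℂ, 1 < s.re → F s = zetaMT s (s - k) (2 * s + k)) (ℓ : ℕ) :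
    F =ᶠ[𝓝[≠] (-(ℓ : ℂ))] Hf k ℓ := by
  have hl : (0 : ℝ) ≤ ℓ := Nat.cast_nonneg ℓ
  have h1 : F =ᶠ[𝓝[≠] (7 / 8 : ℂ)] fun s => zetaMT s (s - k) (2 * s + k) := by
    refine mero_identity (U := {s : ℂ | 1 / 2 < s.re}) (x := 2) (convex_halfSpace_re_gt _).isPreconnected
      (fun s _ => hmero s trivial) (fun s hs => ?_) (by simp; norm_num) (by simp; norm_num) ?_
    · exact ((zetaMT_differentiableOn k).analyticAt
        ((isOpen_lt continuous_const Complex.continuous_re).mem_nhds hs)).meromorphicAt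
    · apply Filter.Eventually.filter_mono nhdsWithin_le_nhds
      filter_upwards [(isOpen_lt continuous_const Complex.continuous_re).mem_nhds
        (show (1 : ℝ) < (2 : ℂ).re by simp)] with s hs using hser s hs
  have h2 : (fun s => zetaMT s (s - k) (2 * s + k)) =ᶠ[𝓝[≠] (7 / 8 : ℂ)] Hf k ℓ := by
    apply Filter.Eventually.filter_mono nhdsWithin_le_nhds
    have hmem : {s : ℂ | 3 / 4 < s.re ∧ s.re < 1} ∈ 𝓝 (7 / 8 : ℂ) :=
      IsOpen.mem_nhds ((isOpen_lt continuous_const Complex.continuous_re).inter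
        (isOpen_lt Complex.continuous_re continuous_const)) (by constructor <;> simp <;> norm_num)
    filter_upwards [hmem] with s hs using main_identity k ℓ hk hs.1 hs.2
  refine mero_identity (convex_strip (-((ℓ : ℝ) + 1)) 1).isPreconnected
    (fun s _ => hmero s trivial) (Hf_mero k ℓ hk) (x := 7 / 8) ?_ ?_ (h1.trans h2)
  · constructor
    · simp; linarith
    · simp; norm_num
  · constructor
    · simp
    · simp; linarith

/-- the analytic cofactor of `Γ(3 * s - 1)` in `Af` -/
lemma Af_cofactor (k ℓ : ℕ) : AnalyticAt ℂ (fun s : ℂ => Complex.Gamma (1 - (s - k)) *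
    (Complex.Gamma (2 * s + k))⁻¹ * riemannZeta (4 * s - 1)) (-(ℓ : ℂ)) := by
  refine (AnalyticAt.mul ?_ (invGamma_analyticAt k _)).mul ?_
  · refine AnalyticAt.fun_comp (g := Complex.Gamma) (f := fun s : ℂ => 1 - (s - k))
      (Gamma_analyticAt fun m h => ?_) (by fun_prop)
    have := congrArg Complex.re h
    simp at this
    have h1 : (0 : ℝ) ≤ ℓ := Nat.cast_nonneg ℓ
    have h2 : (0 : ℝ) ≤ k := Nat.cast_nonneg k
    have h3 : (0 : ℝ) ≤ m := Nat.cast_nonneg m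
    linarith
  · refine AnalyticAt.fun_comp (g := riemannZeta) (f := fun s : ℂ => 4 * s - 1)
      (zeta_analyticAt fun h => ?_) (by fun_prop)
    have := congrArg Complex.re h
    simp at this
    have h1 : (0 : ℝ) ≤ ℓ := Nat.cast_nonneg ℓ
    linarith

lemma Bf_cofactor (k ℓ j : ℕ) : AnalyticAt ℂ (fun s : ℂ => (∏ i ∈ Finset.range j, (2 * s + k + i)) *
    ((-1) ^ j / (j.factorial : ℂ)) * riemannZeta (s - k - j)) (-(ℓ : ℂ)) := by
  refine AnalyticAt.mul (AnalyticAt.mul ?_ analyticAt_const) ?_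
  · exact Finset.analyticAt_fun_prod _ (fun i _ => by fun_prop)
  · refine AnalyticAt.fun_comp (g := riemannZeta) (f := fun s : ℂ => s - k - j)
      (zeta_analyticAt fun h => ?_) (by fun_prop)
    have := congrArg Complex.re h
    simp at this
    have h1 : (0 : ℝ) ≤ ℓ := Nat.cast_nonneg ℓ
    have h2 : (0 : ℝ) ≤ k := Nat.cast_nonneg k
    have h3 : (0 : ℝ) ≤ j := Nat.cast_nonneg j
    linarith

lemma Gamma_pole3 (ℓ : ℕ) :
    HolAt (fun s : ℂ => (s - -(ℓ : ℂ)) * Complex.Gamma (3 * s - 1)) (-(ℓ : ℂ)) := by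
  have h : HolAt (fun s : ℂ => (3 * s + -1 + (3 * ℓ + 1 : ℕ)) * Complex.Gamma (3 * s + -1))
      (-(ℓ : ℂ)) := by
    apply HolAt.comp_affine (f := fun z => (z + (3 * ℓ + 1 : ℕ)) * Complex.Gamma z) (by norm_num)
    rw [show 3 * -(ℓ : ℂ) + -1 = -((3 * ℓ + 1 : ℕ) : ℂ) by push_cast; ring]
    exact gamma_pole _
  refine ((analyticAt_const (v := (1 / 3 : ℂ))).holAt.mul h).congr (Eventually.of_forall fun s => ?_)
  simp only [← sub_eq_add_neg]
  push_cast
  ring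

lemma zeta_pole3 (k ℓ j : ℕ) :
    HolAt (fun s : ℂ => (s - -(ℓ : ℂ)) * riemannZeta (3 * s + k + j)) (-(ℓ : ℂ)) := by
  by_cases h : 3 * -(ℓ : ℂ) + (k + j) = 1
  · have h1 : HolAt (fun s : ℂ => (3 * s + (k + j) - 1) * riemannZeta (3 * s + (k + j)))
        (-(ℓ : ℂ)) := by
      apply HolAt.comp_affine (f := fun z => (z - 1) * riemannZeta z) (by norm_num)
      rw [h]
      exact zeta_pole
    refine ((analyticAt_const (v := (1 / 3 : ℂ))).holAt.mul h1).congr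
      (Eventually.of_forall fun s => ?_)
    simp only [← add_assoc]
    linear_combination (-(1 / 3) * riemannZeta (3 * s + k + j)) * h
  · refine (AnalyticAt.mul (f := fun s : ℂ => s - -(ℓ : ℂ)) (by fun_prop) ?_).holAt
    refine AnalyticAt.fun_comp (g := riemannZeta) (f := fun s : ℂ => 3 * s + k + j)
      (zeta_analyticAt fun h' => h ?_) (by fun_prop)
    rw [← h']; ring

lemma Af_pole (k ℓ : ℕ) : HolAt (fun s => (s - -(ℓ : ℂ)) * Af k s) (-(ℓ : ℂ)) := by
  refine ((Gamma_pole3 ℓ).mul (Af_cofactor k ℓ).holAt).congr (Eventually.of_forall fun s => ?_)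
  simp only [Af]; ring

lemma Bf_pole (k ℓ j : ℕ) : HolAt (fun s => (s - -(ℓ : ℂ)) * Bf k j s) (-(ℓ : ℂ)) := by
  refine ((zeta_pole3 k ℓ j).mul (Bf_cofactor k ℓ j).holAt).congr (Eventually.of_forall fun s => ?_)
  simp only [Bf]; ring

lemma Bf_hol_of_ne {k ℓ j : ℕ} (h : k + j ≠ 3 * ℓ + 1) : HolAt (Bf k j) (-(ℓ : ℂ)) := by
  refine (AnalyticAt.mul ?_ (Bf_cofactor k ℓ j)).holAt
  refine AnalyticAt.fun_comp (g := riemannZeta) (f := fun s : ℂ => 3 * s + k + j)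
    (zeta_analyticAt fun h' => h ?_) (by fun_prop)
  have : ((k + j : ℕ) : ℂ) = ((3 * ℓ + 1 : ℕ) : ℂ) := by
    push_cast
    linear_combination h'
  exact_mod_cast this

lemma rest_hol (k ℓ : ℕ) (hk : 1 ≤ k) :
    HolAt (fun s => (Complex.Gamma (2 * s + k))⁻¹ * Ef k ℓ s) (-(ℓ : ℂ)) :=
  ((invGamma_analyticAt k _).mul (Ef_analyticAt k ℓ hk (by simp) (by
    have h1 : (0 : ℝ) ≤ ℓ := Nat.cast_nonneg ℓ
    simp; linarith))).holAt

lemma Hf_hol {k ℓ : ℕ} (hk : 1 ≤ k) (h : k ≤ 2 * ℓ) : HolAt (Hf k ℓ) (-(ℓ : ℂ)) := by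
  refine HolAt.add (HolAt.add ?_ (HolAt.sum _ fun j _ => ?_)) (rest_hol k ℓ hk)
  · refine HolAt.mul_of_zero (Gamma_pole3 ℓ) (Af_cofactor k ℓ) ?_
    have : (2 * -(ℓ : ℂ) + k) = -((2 * ℓ - k : ℕ) : ℂ) := by
      rw [Nat.cast_sub h]; push_cast; ring
    simp only [this, Complex.Gamma_neg_nat_eq_zero, inv_zero, mul_zero, zero_mul]
  · by_cases hj : k + j = 3 * ℓ + 1
    · refine HolAt.mul_of_zero (zeta_pole3 k ℓ j) (Bf_cofactor k ℓ j) ?_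
      have : ∏ i ∈ Finset.range j, (2 * -(ℓ : ℂ) + k + i) = 0 := by
        apply Finset.prod_eq_zero (i := 2 * ℓ - k) (Finset.mem_range.mpr (by omega))
        rw [Nat.cast_sub h]; push_cast; ring
      rw [this]; simp
    · exact Bf_hol_of_ne hj

lemma Hf_pole {k ℓ : ℕ} (hk : 1 ≤ k) : HolAt (fun s => (s - -(ℓ : ℂ)) * Hf k ℓ s) (-(ℓ : ℂ)) := by
  have hlin : HolAt (fun s : ℂ => s - -(ℓ : ℂ)) (-(ℓ : ℂ)) := AnalyticAt.holAt (by fun_prop)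
  have := ((Af_pole k ℓ).add (HolAt.sum (Finset.range (3 * ℓ + 5)) fun j _ => Bf_pole k ℓ j)).add
    (hlin.mul (rest_hol k ℓ hk))
  refine this.congr (Eventually.of_forall fun s => ?_)
  simp only [Hf, mul_add, Finset.mul_sum]

lemma Hf_hol_one_zero : HolAt (Hf 1 0) 0 := by
  have hz : (-((0 : ℕ) : ℂ)) = 0 := by simp
  have hA := Af_pole 1 0
  have hB := Bf_pole 1 0 0
  have hR := rest_hol 1 0 le_rfl
  have hC := Af_cofactor 1 0
  have hD := Bf_cofactor 1 0 0
  have hS : HolAt (fun s => ∑ j ∈ Finset.range 4, Bf 1 (j + 1) s) 0 := by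
    apply HolAt.sum
    intro j _
    have := Bf_hol_of_ne (k := 1) (ℓ := 0) (j := j + 1) (by omega)
    rwa [hz] at this
  rw [hz] at hA hB hR hC hD
  have hAB : HolAt (fun s => Af 1 s + Bf 1 0 s) 0 := by
    apply HolAt.of_tendsto
    · refine (hA.add hB).congr (Eventually.of_forall fun s => ?_)
      ring
    · have tA : Tendsto (fun s : ℂ => s * Complex.Gamma (3 * s - 1)) (𝓝[≠] 0) (𝓝 (-1 / 3)) := by
        have hc : ContinuousAt (fun s : ℂ => Complex.Gamma (3 * s + 1) / (3 * (3 * s - 1))) 0 := by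
          apply ContinuousAt.div
          · refine ContinuousAt.comp' (g := Complex.Gamma) (f := fun s : ℂ => 3 * s + 1)
              (Gamma_analyticAt fun m h => ?_).continuousAt (by fun_prop)
            have := congrArg Complex.re h
            simp at this
            linarith [(Nat.cast_nonneg m : (0 : ℝ) ≤ m)]
          · fun_prop
          · norm_num
        have h1 := hc.tendsto.mono_left (nhdsWithin_le_nhds (s := {0}ᶜ))
        have hv : Complex.Gamma (3 * (0 : ℂ) + 1) / (3 * (3 * (0 : ℂ) - 1)) = -1 / 3 := by
          simp [Complex.Gamma_one]; norm_num
        rw [hv] at h1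
        refine h1.congr' ?_
        have hne : ∀ᶠ s : ℂ in 𝓝[≠] 0, 3 * s - 1 ≠ 0 := by
          apply Filter.Eventually.filter_mono nhdsWithin_le_nhds
          exact ContinuousAt.eventually_ne (by fun_prop) (by norm_num)
        filter_upwards [self_mem_nhdsWithin, hne] with s hs hs1
        have hs0 : s ≠ 0 := hs
        have e1 := Complex.Gamma_add_one (3 * s) (by simpa using hs0)
        have e2 := Complex.Gamma_add_one (3 * s - 1) hs1
        rw [sub_add_cancel] at e2
        rw [e1, e2]
        field_simp
      have tB : Tendsto (fun s : ℂ => s * riemannZeta (3 * s + 1)) (𝓝[≠] 0) (𝓝 (1 / 3)) := by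
        have ht : Tendsto (fun s : ℂ => 3 * s + 1) (𝓝[≠] 0) (𝓝[≠] 1) := by
          apply tendsto_nhdsWithin_of_tendsto_nhds_of_eventually_within
          · have : Tendsto (fun s : ℂ => 3 * s + 1) (𝓝 0) (𝓝 (3 * 0 + 1)) :=
              Continuous.tendsto (by fun_prop) 0
            rw [mul_zero, zero_add] at this
            exact this.mono_left nhdsWithin_le_nhds
          · filter_upwards [self_mem_nhdsWithin] with s hs h
            apply hs
            have h' : 3 * s + 1 = 1 := h
            simpa using h'
        have h1 := (riemannZeta_residue_one.comp ht).const_mul (1 / 3)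
        rw [mul_one] at h1
        refine h1.congr fun s => ?_
        simp only [Function.comp]; ring
      have tC := hC.continuousAt.tendsto.mono_left (nhdsWithin_le_nhds (s := {0}ᶜ))
      have tD := hD.continuousAt.tendsto.mono_left (nhdsWithin_le_nhds (s := {0}ᶜ))
      have := (tA.mul tC).add (tB.mul tD)
      convert! this using 1
      · funext s
        simp only [Af, Bf]
        norm_num
        ring
      · norm_num
  refine ((hAB.add hS).add hR).congr (Eventually.of_forall fun s => ?_)
  simp only [Hf, mul_zero, zero_add]
  rw [Finset.sum_range_succ']
  ring

lemma cpow_succ_aux {x : ℂ} (y : ℂ) (hx : x ≠ 0) : x ^ (y + 1) = x ^ y * x := by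
  rw [Complex.cpow_add _ _ hx, Complex.cpow_one]

lemma zetaMT_shift {s : ℂ} (hs : 1 / 2 < s.re) :
    zetaMT s (s - (0 : ℕ)) (2 * s + (0 : ℕ)) = 2 * zetaMT s (s - (1 : ℕ)) (2 * s + (1 : ℕ)) := by
  have hS := zetaMT_summable 1 hs
  have hS2 := (Equiv.prodComm ℕ ℕ).summable_iff.mpr hS
  have e2 := (Equiv.prodComm ℕ ℕ).tsum_eq (fun p : ℕ × ℕ =>
    ((p.1 + 1 : ℕ) : ℂ) ^ (-s) * ((p.2 + 1 : ℕ) : ℂ) ^ (-(s - (1 : ℕ))) *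
      ((p.1 + p.2 + 2 : ℕ) : ℂ) ^ (-(2 * s + (1 : ℕ))))
  have hT : zetaMT s (s - (1 : ℕ)) (2 * s + (1 : ℕ)) = ∑' p : ℕ × ℕ,
      ((p.1 + 1 : ℕ) : ℂ) ^ (-s) * ((p.2 + 1 : ℕ) : ℂ) ^ (-(s - (1 : ℕ))) *
      ((p.1 + p.2 + 2 : ℕ) : ℂ) ^ (-(2 * s + (1 : ℕ))) := rfl
  have hT3 := hS.tsum_add hS2
  have hT4 : 2 * zetaMT s (s - (1 : ℕ)) (2 * s + (1 : ℕ)) = zetaMT s (s - (1 : ℕ)) (2 * s + (1 : ℕ)) +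
    zetaMT s (s - (1 : ℕ)) (2 * s + (1 : ℕ)) := two_mul _
  rw [hT4, hT]
  nth_rewrite 2 [← e2]
  refine Eq.trans ?_ hT3
  rw [zetaMT]
  refine tsum_congr fun p => ?_
  simp only [Function.comp, Equiv.prodComm_apply, Prod.fst_swap, Prod.snd_swap]
  have h1 : ((p.1 + 1 : ℕ) : ℂ) ≠ 0 := Nat.cast_ne_zero.mpr (by omega)
  have h2 : ((p.2 + 1 : ℕ) : ℂ) ≠ 0 := Nat.cast_ne_zero.mpr (by omega)
  have h3 : ((p.1 + p.2 + 2 : ℕ) : ℂ) ≠ 0 := Nat.cast_ne_zero.mpr (by omega)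
  have a1 : ((p.1 + 1 : ℕ) : ℂ) ^ (-(s - (1 : ℕ))) = ((p.1 + 1 : ℕ) : ℂ) ^ (-s) *
      ((p.1 + 1 : ℕ) : ℂ) := by
    rw [← cpow_succ_aux _ h1]; congr 1; push_cast; ring
  have a2 : ((p.2 + 1 : ℕ) : ℂ) ^ (-(s - (1 : ℕ))) = ((p.2 + 1 : ℕ) : ℂ) ^ (-s) *
      ((p.2 + 1 : ℕ) : ℂ) := by
    rw [← cpow_succ_aux _ h2]; congr 1; push_cast; ring
  have a3 : ((p.1 + p.2 + 2 : ℕ) : ℂ) ^ (-(2 * s + (0 : ℕ))) =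
      ((p.1 + p.2 + 2 : ℕ) : ℂ) ^ (-(2 * s + (1 : ℕ))) * ((p.1 + p.2 + 2 : ℕ) : ℂ) := by
    rw [← cpow_succ_aux _ h3]; congr 1; push_cast; ring
  have a4 : ((p.1 + p.2 + 2 : ℕ) : ℂ) = ((p.1 + 1 : ℕ) : ℂ) + ((p.2 + 1 : ℕ) : ℂ) := by
    push_cast; ring
  have a5 : p.2 + p.1 + 2 = p.1 + p.2 + 2 := by omega
  have a6 : -(s - ((0 : ℕ) : ℂ)) = -s := by simp
  rw [a5, a1, a2, a3, a6]
  generalize ((p.1 + p.2 + 2 : ℕ) : ℂ) ^ (-(2 * s + (1 : ℕ))) = X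
  rw [a4]
  ring

lemma stmt18_pos (k : ℕ) (hk : 1 ≤ k) (F : ℂ → ℂ) (hmero : MeromorphicOn F Set.univ)
    (hser : ∀ s : ℂ, 1 < s.re → F s = zetaMT s (s - k) (2 * s + k)) :
    (∀ ℓ : ℕ, HolAt (fun s => (∏ i ∈ Finset.range k, (s + (i : ℂ))) * F s) (-(ℓ : ℂ))) ∧
    (∀ ℓ : ℕ, k ≤ 2 * ℓ → HolAt F (-(ℓ : ℂ))) := by
  have h2 : ∀ ℓ : ℕ, k ≤ 2 * ℓ → HolAt F (-(ℓ : ℂ)) := fun ℓ hl =>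
    (Hf_hol hk hl).congr (F_eq_Hf k hk F hmero hser ℓ)
  refine ⟨fun ℓ => ?_, h2⟩
  have hp : AnalyticAt ℂ (fun s : ℂ => ∏ i ∈ Finset.range k, (s + (i : ℂ))) (-(ℓ : ℂ)) :=
    Finset.analyticAt_fun_prod _ (fun i _ => by fun_prop)
  by_cases hl : k ≤ 2 * ℓ
  · exact hp.holAt.mul (h2 ℓ hl)
  · have h3 : HolAt (fun s => (s - -(ℓ : ℂ)) * F s) (-(ℓ : ℂ)) := by
      refine (Hf_pole (ℓ := ℓ) hk).congr ?_
      filter_upwards [F_eq_Hf k hk F hmero hser ℓ] with s hs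
      rw [hs]
    refine (h3.mul_of_zero hp ?_).congr (Eventually.of_forall fun s => mul_comm _ _)
    exact Finset.prod_eq_zero (i := ℓ) (Finset.mem_range.mpr (by omega)) (by ring)

theorem stmt18_aux (k : ℕ) (F : ℂ → ℂ) (hmero : MeromorphicOn F Set.univ)
    (hser : ∀ s : ℂ, 1 < s.re → F s = zetaMT s (s - k) (2 * s + k)) :
    (∀ ℓ : ℕ, HolAt (fun s => (∏ i ∈ Finset.range k, (s + (i : ℂ))) * F s) (-(ℓ : ℂ))) ∧
    (∀ ℓ : ℕ, k ≤ 2 * ℓ → HolAt F (-(ℓ : ℂ))) := by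
  rcases Nat.eq_zero_or_pos k with rfl | hk
  · have hm2 : MeromorphicOn (fun s => (1 / 2 : ℂ) * F s) Set.univ := fun s hs =>
      (MeromorphicAt.const (1 / 2 : ℂ) s).mul (hmero s hs)
    have hs2 : ∀ s : ℂ, 1 < s.re → (1 / 2 : ℂ) * F s = zetaMT s (s - (1 : ℕ)) (2 * s + (1 : ℕ)) := by
      intro s hs
      rw [hser s hs, zetaMT_shift (by linarith)]
      ring
    have key : ∀ ℓ : ℕ, HolAt F (-(ℓ : ℂ)) := by
      intro ℓ
      have h : HolAt (fun s => (1 / 2 : ℂ) * F s) (-(ℓ : ℂ)) := by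
        rcases Nat.eq_zero_or_pos ℓ with rfl | hl
        · have h0 : HolAt (Hf 1 0) (-((0 : ℕ) : ℂ)) := by simpa using Hf_hol_one_zero
          exact h0.congr (F_eq_Hf 1 le_rfl _ hm2 hs2 0)
        · exact (stmt18_pos 1 le_rfl _ hm2 hs2).2 ℓ (by omega)
      refine ((analyticAt_const (v := (2 : ℂ))).holAt.mul h).congr (Eventually.of_forall fun s => ?_)
      ring
    exact ⟨fun ℓ => (key ℓ).congr (Eventually.of_forall fun s => by simp), fun ℓ _ => key ℓ⟩
  · exact stmt18_pos k hk F hmero hser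

end helpers

theorem stmt18 (k : ℕ) (F : ℂ → ℂ)
    (hmero : MeromorphicOn F Set.univ)
    (hser : ∀ s : ℂ, 1 < s.re → F s = zetaMT s (s - k) (2 * s + k)) :
    (∀ ℓ : ℕ, ∃ G : ℂ → ℂ, AnalyticAt ℂ G (-(ℓ : ℂ)) ∧
      (fun s => (∏ i ∈ Finset.range k, (s + (i : ℂ))) * F s) =ᶠ[𝓝[≠] (-(ℓ : ℂ))] G) ∧
    (∀ ℓ : ℕ, k ≤ 2 * ℓ → ∃ G : ℂ → ℂ, AnalyticAt ℂ G (-(ℓ : ℂ)) ∧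
      F =ᶠ[𝓝[≠] (-(ℓ : ℂ))] G) := by
  exact stmt18_aux k F hmero hser
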